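/- arXiv:math/0606007 — 2 statements merged into one kernel-verified Lean document; each statement's English description precedes it below -/
import Mathlib

section
/- (Fáry/Milnor theorem) If K : ℝ/ℤ → ℝ³ is a knotted closed curve, then its total curvature satisfies TC(K) ≥ 4π. Equivalently, every closed knot in ℝ³ with total curvature strictly less than 4π is unknotted. -/
open Set Filter MeasureTheory
open scoped ENNReal NNReal RealInnerProductSpace

noncomputable section

/-- The parameters `u 0 < u 1 < ⋯ < u m` of a polygon inscribed in (the restriction to
`[a,b]` of) a curve: strictly increasing parameters lying in `[a,b]`. -/
def InscribedIn (a b : ℝ) (m : ℕ) (u : ℕ → ℝ) : Prop :=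
  (∀ i < m, u i < u (i + 1)) ∧ ∀ i ≤ m, u i ∈ Set.Icc a b

/-- The length of the polygon inscribed in the curve `γ` with parameters `u 0, …, u m`:
the sum of the euclidean lengths of its edges. -/
def polyLen {E : Type*} [NormedAddCommGroup E] (γ : ℝ → E) (m : ℕ) (u : ℕ → ℝ) : ℝ :=
  ∑ i ∈ Finset.range m, ‖γ (u (i + 1)) - γ (u i)‖

/-- The (Jordan) length of the arc `γ : [a,b] → E`: the supremum of the lengths of all
inscribed polygons, valued in `[0,∞]`. -/
def arcLen {E : Type*} [NormedAddCommGroup E] (γ : ℝ → E) (a b : ℝ) : ℝ≥0∞ :=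
  ⨆ (m : ℕ) (u : ℕ → ℝ) (_ : InscribedIn a b m u), ENNReal.ofReal (polyLen γ m u)

/-- The list of vertices of the polygon inscribed in `γ` with parameters `u 0, …, u m`. -/
def vertexList {E : Type*} (γ : ℝ → E) (m : ℕ) (u : ℕ → ℝ) : List E :=
  (List.range (m + 1)).map fun i => γ (u i)

/-- Collapse consecutive equal entries of a list to single entries. -/
def collapse {E : Type*} (l : List E) : List E :=
  @List.destutter E (· ≠ ·) (Classical.decRel _) l

/-- The sum of the turning angles of a polygon given by its list of vertices: at each
interior vertex, the angle in `[0,π]` between the incoming and outgoing edge vectors. -/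
def turnSum {E : Type*} [NormedAddCommGroup E] [InnerProductSpace ℝ E] : List E → ℝ
  | a :: b :: c :: l => InnerProductGeometry.angle (b - a) (c - b) + turnSum (b :: c :: l)
  | _ => 0

/-- The sum, at each interior vertex, of the euclidean distance `‖u₊ - u₋‖` between the
unit tangent vectors of the incoming and outgoing edges (so a corner of turning angle θ
contributes `2 sin(θ/2)`). -/
def starSum {E : Type*} [NormedAddCommGroup E] [InnerProductSpace ℝ E] : List E → ℝ
  | a :: b :: c :: l =>
      ‖(‖c - b‖⁻¹ • (c - b)) - (‖b - a‖⁻¹ • (b - a))‖ + starSum (b :: c :: l)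
  | _ => 0

/-- The total curvature of the polygon inscribed in `γ` with parameters `u 0, …, u m`:
after collapsing consecutive equal vertices, the sum of its turning angles. -/
def polyTC {E : Type*} [NormedAddCommGroup E] [InnerProductSpace ℝ E]
    (γ : ℝ → E) (m : ℕ) (u : ℕ → ℝ) : ℝ :=
  turnSum (collapse (vertexList γ m u))

/-- The total curvature of the arc `γ : [a,b] → E`: the supremum over all inscribed
polygons of their total curvature, valued in `[0,∞]`. -/
def arcTC {E : Type*} [NormedAddCommGroup E] [InnerProductSpace ℝ E]
    (γ : ℝ → E) (a b : ℝ) : ℝ≥0∞ :=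
  ⨆ (m : ℕ) (u : ℕ → ℝ) (_ : InscribedIn a b m u), ENNReal.ofReal (polyTC γ m u)

/-- The euclidean total curvature `TC*` of the polygon inscribed in `γ` with parameters
`u 0, …, u m`. -/
def polyTCStar {E : Type*} [NormedAddCommGroup E] [InnerProductSpace ℝ E]
    (γ : ℝ → E) (m : ℕ) (u : ℕ → ℝ) : ℝ :=
  starSum (collapse (vertexList γ m u))

/-- The euclidean total curvature `TC*` of the arc `γ : [a,b] → E`. -/
def arcTCStar {E : Type*} [NormedAddCommGroup E] [InnerProductSpace ℝ E]
    (γ : ℝ → E) (a b : ℝ) : ℝ≥0∞ :=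
  ⨆ (m : ℕ) (u : ℕ → ℝ) (_ : InscribedIn a b m u), ENNReal.ofReal (polyTCStar γ m u)

/-- Cyclically ordered parameters `u 0 < ⋯ < u m` in `[0,1)` of a polygon inscribed in a
loop `γ : ℝ/ℤ → E`. -/
def LoopInscribed (m : ℕ) (u : ℕ → ℝ) : Prop :=
  (∀ i < m, u i < u (i + 1)) ∧ ∀ i ≤ m, u i ∈ Set.Ico (0 : ℝ) 1

/-- The list of vertices of the polygon inscribed in the loop `γ` with parameters
`u 0, …, u m`. -/
def loopVertexList {E : Type*} (γ : AddCircle (1 : ℝ) → E) (m : ℕ) (u : ℕ → ℝ) : List E :=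
  (List.range (m + 1)).map fun i => γ (u i : ℝ)

/-- The sum of the lengths of the successive edges of a list of points. -/
def lenList {E : Type*} [NormedAddCommGroup E] : List E → ℝ
  | a :: b :: l => ‖b - a‖ + lenList (b :: l)
  | _ => 0

/-- The length of the closed polygon inscribed in the loop `γ` with parameters
`u 0, …, u m`: the sum of the edge lengths, indices taken cyclically. -/
def loopPolyLen {E : Type*} [NormedAddCommGroup E]
    (γ : AddCircle (1 : ℝ) → E) (m : ℕ) (u : ℕ → ℝ) : ℝ :=
  lenList (loopVertexList γ m u ++ (loopVertexList γ m u).take 1)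

/-- The length of a loop `γ : ℝ/ℤ → E`: the supremum of the lengths of inscribed closed
polygons, valued in `[0,∞]`. -/
def loopLen {E : Type*} [NormedAddCommGroup E] (γ : AddCircle (1 : ℝ) → E) : ℝ≥0∞ :=
  ⨆ (m : ℕ) (u : ℕ → ℝ) (_ : LoopInscribed m u), ENNReal.ofReal (loopPolyLen γ m u)

open Classical in
/-- Collapse consecutive equal vertices of a *cyclic* list of vertices: collapse
consecutive duplicates, also across the wrap-around. -/
def cyclicCollapse {E : Type*} (l : List E) : List E :=
  if 2 ≤ (collapse l).length ∧ (collapse l).getLast? = (collapse l).head? then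
    (collapse l).dropLast
  else collapse l

/-- The total curvature of the closed polygon inscribed in the loop `γ` with parameters
`u 0, …, u m`: after cyclically collapsing consecutive equal vertices, the sum of the
turning angles at all of its vertices (every vertex of a closed polygon is interior). -/
def loopPolyTC {E : Type*} [NormedAddCommGroup E] [InnerProductSpace ℝ E]
    (γ : AddCircle (1 : ℝ) → E) (m : ℕ) (u : ℕ → ℝ) : ℝ :=
  turnSum (cyclicCollapse (loopVertexList γ m u) ++
    (cyclicCollapse (loopVertexList γ m u)).take 2)

/-- The total curvature of a loop `γ : ℝ/ℤ → E`: the supremum over all inscribed closed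
polygons of their total curvature, valued in `[0,∞]`. -/
def loopTC {E : Type*} [NormedAddCommGroup E] [InnerProductSpace ℝ E]
    (γ : AddCircle (1 : ℝ) → E) : ℝ≥0∞ :=
  ⨆ (m : ℕ) (u : ℕ → ℝ) (_ : LoopInscribed m u), ENNReal.ofReal (loopPolyTC γ m u)

/-- The euclidean total curvature `TC*` of the closed inscribed polygon. -/
def loopPolyTCStar {E : Type*} [NormedAddCommGroup E] [InnerProductSpace ℝ E]
    (γ : AddCircle (1 : ℝ) → E) (m : ℕ) (u : ℕ → ℝ) : ℝ :=
  starSum (cyclicCollapse (loopVertexList γ m u) ++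
    (cyclicCollapse (loopVertexList γ m u)).take 2)

/-- The euclidean total curvature `TC*` of a loop `γ : ℝ/ℤ → E`. -/
def loopTCStar {E : Type*} [NormedAddCommGroup E] [InnerProductSpace ℝ E]
    (γ : AddCircle (1 : ℝ) → E) : ℝ≥0∞ :=
  ⨆ (m : ℕ) (u : ℕ → ℝ) (_ : LoopInscribed m u), ENNReal.ofReal (loopPolyTCStar γ m u)

end

/-- `K : ℝ/ℤ → ℝ³` is unknotted if there is an ambient isotopy `H : [0,1] × ℝ³ → ℝ³`
with `H 0 = id`, each `H t` a homeomorphism of `ℝ³`, and `H 1` carrying the image of `K`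
onto the round unit circle in the `xy`-plane. -/
def Unknotted (K : AddCircle (1 : ℝ) → EuclideanSpace ℝ (Fin 3)) : Prop :=
  ∃ H : ℝ × EuclideanSpace ℝ (Fin 3) → EuclideanSpace ℝ (Fin 3),
    ContinuousOn H (Set.Icc (0 : ℝ) 1 ×ˢ Set.univ) ∧
    (∀ x, H (0, x) = x) ∧
    (∀ t ∈ Set.Icc (0 : ℝ) 1, IsHomeomorph fun x => H (t, x)) ∧
    (fun x => H (1, x)) '' Set.range K =
      {p : EuclideanSpace ℝ (Fin 3) | p 0 ^ 2 + p 1 ^ 2 = 1 ∧ p 2 = 0}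

theorem meas_and {α : Type*} [MeasurableSpace α] {p q : α → Prop} (hp : MeasurableSet {x | p x})
    (hq : MeasurableSet {x | q x}) : MeasurableSet {x | p x ∧ q x} := hp.inter hq

/-- angular measure of the double sector -/
theorem angular_bound (θ : ℝ) (h0 : 0 ≤ θ) :
    volume {φ : ℝ | φ ∈ Ioo (-Real.pi) Real.pi ∧
      (Real.cos (θ/2) * Real.cos φ)^2 < (Real.sin (θ/2) * Real.sin φ)^2} ≤ ENNReal.ofReal (2 * θ) := by
  have hpi := Real.pi_pos
  have key : {φ : ℝ | φ ∈ Ioo (-Real.pi) Real.pi ∧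
      (Real.cos (θ/2) * Real.cos φ)^2 < (Real.sin (θ/2) * Real.sin φ)^2} ⊆
      Ioo ((Real.pi - θ)/2) ((Real.pi + θ)/2) ∪ Ioo (-((Real.pi + θ)/2)) (-((Real.pi - θ)/2)) := by
    rintro φ ⟨⟨hφ1, hφ2⟩, h⟩
    have hc : Real.cos (2 * |φ|) < Real.cos (Real.pi - θ) := by
      rw [← Real.cos_abs (2 * |φ|), abs_mul, abs_abs, ← abs_mul, Real.cos_abs,
        Real.cos_pi_sub, Real.cos_two_mul]
      have e1 : Real.cos θ = 2 * Real.cos (θ/2)^2 - 1 := by rw [← Real.cos_two_mul]; ring_nf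
      have e2 := Real.sin_sq_add_cos_sq (θ/2)
      have e3 := Real.sin_sq_add_cos_sq φ
      rw [e1]
      have : Real.sin (θ/2)^2 = 1 - Real.cos (θ/2)^2 := by linarith
      have h' : Real.sin φ^2 = 1 - Real.cos φ^2 := by linarith
      rw [mul_pow, mul_pow, this, h'] at h
      nlinarith
    have habs : |φ| < Real.pi := abs_lt.2 ⟨hφ1, hφ2⟩
    have hnn := abs_nonneg φ
    have l1 : (Real.pi - θ)/2 < |φ| := by
      by_contra hcon
      push Not at hcon
      have := Real.cos_le_cos_of_nonneg_of_le_pi (x := 2 * |φ|) (y := Real.pi - θ)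
        (by positivity) (by linarith) (by linarith)
      linarith
    have l2 : |φ| < (Real.pi + θ)/2 := by
      by_contra hcon
      push Not at hcon
      have := Real.cos_le_cos_of_nonneg_of_le_pi (x := 2 * Real.pi - 2 * |φ|) (y := Real.pi - θ)
        (by linarith) (by linarith) (by linarith)
      rw [Real.cos_two_pi_sub] at this
      linarith
    rcases abs_cases φ with ⟨h, _⟩ | ⟨h, _⟩
    · left; rw [h] at l1 l2; exact ⟨l1, l2⟩
    · right; rw [h] at l1 l2; constructor <;> linarith
  refine (measure_mono key).trans ((measure_union_le _ _).trans ?_)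
  rw [Real.volume_Ioo, Real.volume_Ioo, ← ENNReal.ofReal_add (by linarith) (by linarith)]
  exact ENNReal.ofReal_le_ofReal (by linarith)

theorem planar_bound (θ : ℝ) (h0 : 0 ≤ θ) (h1 : θ ≤ Real.pi) (R : ℝ) :
    volume {p : ℝ × ℝ | p.1^2 + p.2^2 < R ∧
      (Real.cos (θ/2) * p.1)^2 < (Real.sin (θ/2) * p.2)^2} ≤
    ENNReal.ofReal (θ / Real.pi) * volume {p : ℝ × ℝ | p.1^2 + p.2^2 < R} := by
  have hpi := Real.pi_pos
  set A : Set (ℝ × ℝ) := {p : ℝ × ℝ | p.1^2 + p.2^2 < R ∧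
      (Real.cos (θ/2) * p.1)^2 < (Real.sin (θ/2) * p.2)^2} with hA
  set D : Set (ℝ × ℝ) := {p : ℝ × ℝ | p.1^2 + p.2^2 < R} with hD
  have mD : MeasurableSet D := measurableSet_lt (by fun_prop) (by fun_prop)
  have mA : MeasurableSet A := by
    refine meas_and mD (measurableSet_lt ?_ ?_) <;> fun_prop
  set Φ : Set ℝ := {φ : ℝ | φ ∈ Ioo (-Real.pi) Real.pi ∧
      (Real.cos (θ/2) * Real.cos φ)^2 < (Real.sin (θ/2) * Real.sin φ)^2} with hΦ
  have mΦ : MeasurableSet Φ := by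
    refine meas_and (p := fun φ => φ ∈ Ioo (-Real.pi) Real.pi) measurableSet_Ioo
      (measurableSet_lt ?_ ?_) <;> fun_prop
  have mR : MeasurableSet {r : ℝ | 0 < r ∧ r^2 < R} :=
    by refine meas_and (measurableSet_lt ?_ ?_) (measurableSet_lt ?_ ?_) <;> fun_prop
  set G : ℝ → ℝ≥0∞ := fun r => ({r : ℝ | 0 < r ∧ r^2 < R}).indicator (fun r => ENNReal.ofReal r) r with hG
  have mG : Measurable G := (by fun_prop : Measurable fun r : ℝ => ENNReal.ofReal r).indicator mR
  have eA : volume A = (∫⁻ r, G r) * volume Φ := by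
    rw [← lintegral_indicator_one mA, ← lintegral_comp_polarCoord_symm,
      ← lintegral_indicator_one mΦ, ← lintegral_prod_mul mG.aemeasurable
        (by exact (measurable_one.indicator mΦ).aemeasurable),
      ← lintegral_indicator (polarCoord.open_target.measurableSet), ← Measure.volume_eq_prod]
    congr 1
    funext p
    rcases p with ⟨r, φ⟩
    simp only [polarCoord_target, Set.indicator, polarCoord_symm_apply, hG, hA, hΦ, mem_prod,
      mem_Ioi, mem_Ioo, mem_ofPred_eq]
    by_cases hr : 0 < r
    · have e1 : (r * Real.cos φ)^2 + (r * Real.sin φ)^2 = r^2 := by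
        have := Real.sin_sq_add_cos_sq φ
        linear_combination r^2 * this
      have e2 : (Real.cos (θ/2) * (r * Real.cos φ))^2 < (Real.sin (θ/2) * (r * Real.sin φ))^2 ↔
          (Real.cos (θ/2) * Real.cos φ)^2 < (Real.sin (θ/2) * Real.sin φ)^2 := by
        have : 0 < r^2 := by positivity
        have l1 : (Real.cos (θ/2) * (r * Real.cos φ))^2 = r^2 * (Real.cos (θ/2) * Real.cos φ)^2 := by
          ring
        have l2 : (Real.sin (θ/2) * (r * Real.sin φ))^2 = r^2 * (Real.sin (θ/2) * Real.sin φ)^2 := by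
          ring
        rw [l1, l2]
        exact mul_lt_mul_iff_right₀ this
      simp only [e1, e2]
      by_cases a1 : -Real.pi < φ ∧ φ < Real.pi <;> by_cases a2 : r^2 < R <;>
      by_cases a3 : (Real.cos (θ/2) * Real.cos φ)^2 < (Real.sin (θ/2) * Real.sin φ)^2 <;>
      simp [hr, a1, a2, a3]
    · simp [hr]
  have eD : volume D = (∫⁻ r, G r) * ENNReal.ofReal (2 * Real.pi) := by
    have : ENNReal.ofReal (2 * Real.pi) = volume (Ioo (-Real.pi) Real.pi) := by
      rw [Real.volume_Ioo]; ring_nf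
    rw [this, ← lintegral_indicator_one mD, ← lintegral_comp_polarCoord_symm,
      ← lintegral_indicator_one measurableSet_Ioo, ← lintegral_prod_mul mG.aemeasurable
        (by exact (measurable_one.indicator measurableSet_Ioo).aemeasurable),
      ← lintegral_indicator (polarCoord.open_target.measurableSet), ← Measure.volume_eq_prod]
    congr 1
    funext p
    rcases p with ⟨r, φ⟩
    simp only [polarCoord_target, Set.indicator, polarCoord_symm_apply, hG, hD, mem_prod,
      mem_Ioi, mem_Ioo, mem_ofPred_eq]
    by_cases hr : 0 < r
    · have e1 : (r * Real.cos φ)^2 + (r * Real.sin φ)^2 = r^2 := by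
        have := Real.sin_sq_add_cos_sq φ
        linear_combination r^2 * this
      simp only [e1]
      by_cases a1 : -Real.pi < φ ∧ φ < Real.pi <;> by_cases a2 : r^2 < R <;>
      simp [hr, a1, a2]
    · simp [hr]
  rw [eA, eD, mul_left_comm, ← ENNReal.ofReal_mul (by positivity)]
  gcongr
  refine (angular_bound θ h0).trans (ENNReal.ofReal_le_ofReal (le_of_eq ?_))
  field_simp

theorem spatial_bound (θ : ℝ) (h0 : 0 ≤ θ) (h1 : θ ≤ Real.pi) :
    volume {x : EuclideanSpace ℝ (Fin 3) | ‖x‖ < 1 ∧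
      (Real.cos (θ/2) * x 0)^2 < (Real.sin (θ/2) * x 1)^2} ≤
    ENNReal.ofReal (θ / Real.pi) * volume {x : EuclideanSpace ℝ (Fin 3) | ‖x‖ < 1} := by
  have mp : MeasurePreserving (fun x : EuclideanSpace ℝ (Fin 3) => (x 2, (x 0, x 1))) volume
      (volume : Measure (ℝ × ℝ × ℝ)) := by
    have a := EuclideanSpace.volume_preserving_symm_measurableEquiv_toLp (Fin 3)
    have b := volume_preserving_piFinSuccAbove (fun _ : Fin 3 => ℝ) 2
    have c := (MeasurePreserving.id (volume : Measure ℝ)).prod (volume_preserving_finTwoArrow ℝ)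
    exact (c.comp b).comp a
  have n1 : ∀ x : EuclideanSpace ℝ (Fin 3), ‖x‖ < 1 ↔ (x 0)^2 + (x 1)^2 < 1 - (x 2)^2 := by
    intro x
    rw [← sq_lt_one_iff₀ (norm_nonneg _), EuclideanSpace.norm_sq_eq, Fin.sum_univ_three]
    simp only [Real.norm_eq_abs, sq_abs]
    constructor <;> intro h <;> linarith
  set A : Set (ℝ × ℝ × ℝ) := {p | p.2.1^2 + p.2.2^2 < 1 - p.1^2 ∧
    (Real.cos (θ/2) * p.2.1)^2 < (Real.sin (θ/2) * p.2.2)^2}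
  set D : Set (ℝ × ℝ × ℝ) := {p | p.2.1^2 + p.2.2^2 < 1 - p.1^2}
  have mD : MeasurableSet D := measurableSet_lt (by fun_prop) (by fun_prop)
  have mA : MeasurableSet A := by
    refine meas_and mD (measurableSet_lt ?_ ?_) <;> fun_prop
  have e1 := mp.measure_preimage mA.nullMeasurableSet
  have e2 := mp.measure_preimage mD.nullMeasurableSet
  simp only [n1]
  calc _ = volume A := e1
    _ ≤ ENNReal.ofReal (θ / Real.pi) * volume D := by
      rw [Measure.volume_eq_prod, Measure.prod_apply mA, Measure.prod_apply mD,
        ← lintegral_const_mul _ (measurable_measure_prodMk_left mD)]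
      exact lintegral_mono fun z => planar_bound θ h0 h1 (1 - z^2)
    _ = _ := by rw [← e2]; rfl

theorem lune_bound (a b : EuclideanSpace ℝ (Fin 3)) (ha : a ≠ 0) (hb : b ≠ 0) :
    volume {x : EuclideanSpace ℝ (Fin 3) | ‖x‖ < 1 ∧ ⟪a, x⟫ * ⟪b, x⟫ < 0} ≤
    ENNReal.ofReal (InnerProductGeometry.angle a b / Real.pi) *
      volume {x : EuclideanSpace ℝ (Fin 3) | ‖x‖ < 1} := by
  set θ := InnerProductGeometry.angle a b with hθ
  have h0 : 0 ≤ θ := InnerProductGeometry.angle_nonneg _ _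
  have h1 : θ ≤ Real.pi := InnerProductGeometry.angle_le_pi _ _
  have hpi := Real.pi_pos
  have na : 0 < ‖a‖ := norm_pos_iff.2 ha
  have nb : 0 < ‖b‖ := norm_pos_iff.2 hb
  have hcos : ⟪a, b⟫ = Real.cos θ * (‖a‖ * ‖b‖) := by
    rw [hθ, InnerProductGeometry.cos_angle]; field_simp
  -- degenerate cases
  by_cases c1 : θ = Real.pi
  · rw [c1, div_self hpi.ne', ENNReal.ofReal_one, one_mul]
    exact measure_mono fun x hx => hx.1
  by_cases c2 : θ = 0
  · obtain ⟨-, r, hr, hbr⟩ := InnerProductGeometry.angle_eq_zero_iff.1 (hθ ▸ c2)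
    have : {x : EuclideanSpace ℝ (Fin 3) | ‖x‖ < 1 ∧ ⟪a, x⟫ * ⟪b, x⟫ < 0} = ∅ := by
      ext x
      simp only [mem_ofPred_eq, mem_empty_iff_false, iff_false, not_and, not_lt]
      intro _
      rw [hbr, real_inner_smul_left]
      nlinarith [mul_self_nonneg ⟪a, x⟫, mul_nonneg hr.le (mul_self_nonneg ⟪a, x⟫)]
    rw [this]; simp
  have p0 : 0 < θ := lt_of_le_of_ne h0 (Ne.symm c2)
  have p1 : θ < Real.pi := lt_of_le_of_ne h1 c1
  have hc : 0 < Real.cos (θ/2) := Real.cos_pos_of_mem_Ioo ⟨by linarith, by linarith⟩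
  have hs : 0 < Real.sin (θ/2) := Real.sin_pos_of_pos_of_lt_pi (by linarith) (by linarith)
  have ecos : Real.cos θ = 2 * Real.cos (θ/2)^2 - 1 := by rw [← Real.cos_two_mul]; ring_nf
  have esc := Real.sin_sq_add_cos_sq (θ/2)
  set u := ‖a‖⁻¹ • a with hu
  set v := ‖b‖⁻¹ • b with hv
  have uu : ⟪u, u⟫ = 1 := by
    rw [hu, real_inner_smul_left, real_inner_smul_right, real_inner_self_eq_norm_sq]; field_simp
  have vv : ⟪v, v⟫ = 1 := by
    rw [hv, real_inner_smul_left, real_inner_smul_right, real_inner_self_eq_norm_sq]; field_simp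
  have uv : ⟪u, v⟫ = Real.cos θ := by
    rw [hu, hv, real_inner_smul_left, real_inner_smul_right, hcos]; field_simp
  have vu : ⟪v, u⟫ = Real.cos θ := by rw [real_inner_comm, uv]
  set e : Fin 3 → EuclideanSpace ℝ (Fin 3) :=
    ![(2 * Real.cos (θ/2))⁻¹ • (u + v), (2 * Real.sin (θ/2))⁻¹ • (v - u), 0] with he
  have o00 : ⟪e 0, e 0⟫ = 1 := by
    simp only [he, Matrix.cons_val_zero, real_inner_smul_left, real_inner_smul_right,
      inner_add_left, inner_add_right, uu, vv, uv, vu, ecos]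
    field_simp; ring
  have o11 : ⟪e 1, e 1⟫ = 1 := by
    simp only [he, Matrix.cons_val_one, Matrix.cons_val_zero, real_inner_smul_left,
      real_inner_smul_right, inner_sub_left, inner_sub_right, uu, vv, uv, vu, ecos]
    field_simp; linear_combination (-4) * esc
  have o01 : ⟪e 0, e 1⟫ = 0 := by
    simp only [he, Matrix.cons_val_one, Matrix.cons_val_zero, real_inner_smul_left,
      real_inner_smul_right, inner_sub_right, inner_add_left, uu, vv, uv, vu]
    ring
  have hon : Orthonormal ℝ (({0, 1} : Set (Fin 3)).domRestrict e) := by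
    rw [orthonormal_iff_ite]
    rintro ⟨i, hi⟩ ⟨j, hj⟩
    have o10 : ⟪e 1, e 0⟫ = 0 := by rw [real_inner_comm, o01]
    simp only [Set.domRestrict_apply, Subtype.mk.injEq]
    rcases hi with rfl | rfl <;> rcases hj with rfl | rfl
    · simpa using o00
    · simpa using o01
    · simpa using o10
    · simpa using o11
  obtain ⟨B, hB⟩ := hon.exists_orthonormalBasis_extension_of_card_eq (by simp)
  have b0 := hB 0 (by simp)
  have b1 := hB 1 (by simp)
  have mp := B.measurePreserving_repr
  set A : Set (EuclideanSpace ℝ (Fin 3)) := {x | ‖x‖ < 1 ∧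
      (Real.cos (θ/2) * x 0)^2 < (Real.sin (θ/2) * x 1)^2} with hA
  have mA : MeasurableSet A := by
    refine meas_and (measurableSet_lt ?_ ?_) (measurableSet_lt ?_ ?_) <;> fun_prop
  have e1 := mp.measure_preimage mA.nullMeasurableSet
  refine le_trans (le_of_eq ?_) (spatial_bound θ h0 h1)
  rw [← hA, ← e1]
  congr 1
  ext x
  simp only [hA, mem_ofPred_eq, mem_preimage, LinearIsometryEquiv.norm_map,
    OrthonormalBasis.repr_apply_apply, b0, b1]
  apply and_congr_right
  intro _
  have i1 : ⟪a, x⟫ = ‖a‖ * ⟪u, x⟫ := by rw [hu, real_inner_smul_left]; field_simp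
  have i2 : ⟪b, x⟫ = ‖b‖ * ⟪v, x⟫ := by rw [hv, real_inner_smul_left]; field_simp
  have i3 : Real.cos (θ/2) * ⟪e 0, x⟫ = (⟪u, x⟫ + ⟪v, x⟫)/2 := by
    simp only [he, Matrix.cons_val_zero, real_inner_smul_left, inner_add_left]; field_simp
  have i4 : Real.sin (θ/2) * ⟪e 1, x⟫ = (⟪v, x⟫ - ⟪u, x⟫)/2 := by
    simp only [he, Matrix.cons_val_one, Matrix.cons_val_zero, real_inner_smul_left, inner_sub_left]
    field_simp
  rw [i3, i4, i1, i2]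
  have : ‖a‖ * ⟪u, x⟫ * (‖b‖ * ⟪v, x⟫) = (‖a‖ * ‖b‖) * (⟪u, x⟫ * ⟪v, x⟫) := by ring
  rw [this, mul_neg_iff]
  have hp : 0 < ‖a‖ * ‖b‖ := by positivity
  constructor
  · rintro (h | h)
    · nlinarith [h.2]
    · linarith [h.1]
  · intro h; left; exact ⟨hp, by nlinarith⟩


theorem turnSum_map_range {E : Type*} [NormedAddCommGroup E] [InnerProductSpace ℝ E] (N : ℕ)
    (f : ℕ → E) : turnSum ((List.range (N + 2)).map f) =
      ∑ i ∈ Finset.range N, InnerProductGeometry.angle (f (i+1) - f i) (f (i+2) - f (i+1)) := by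
  induction N generalizing f with
  | zero => simp [List.range_succ, turnSum]
  | succ N ih =>
    have h : (List.range (N + 1 + 2)).map f
        = f 0 :: f 1 :: f 2 :: (List.range N).map (fun i => f (i + 3)) := by
      rw [show N + 1 + 2 = N + 1 + 1 + 1 from rfl, List.range_succ_eq_map, List.range_succ_eq_map,
        List.range_succ_eq_map]
      simp [Function.comp_def]
    have h' : (List.range (N + 2)).map (fun i => f (i + 1))
        = f 1 :: f 2 :: (List.range N).map (fun i => f (i + 3)) := by
      rw [show N + 2 = N + 1 + 1 from rfl, List.range_succ_eq_map, List.range_succ_eq_map]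
      simp [Function.comp_def]
    rw [h, turnSum, ← h', ih, Finset.sum_range_succ']
    rw [add_comm]

theorem coe_ne_of_abs_lt {a b : ℝ} (h0 : a ≠ b) (h1 : |a - b| < 1) :
    (a : AddCircle (1:ℝ)) ≠ (b : AddCircle (1:ℝ)) := by
  intro h
  have h2 := (QuotientAddGroup.eq.1 h)
  rw [AddSubgroup.mem_zmultiples_iff] at h2
  obtain ⟨k, hk⟩ := h2
  rw [zsmul_eq_mul, mul_one] at hk
  have : |(k:ℝ)| < 1 := by rw [hk]; rwa [show -a + b = -(a - b) by ring, abs_neg]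
  have hk0 : k = 0 := by
    have : |k| < 1 := by exact_mod_cast this
    exact Int.abs_lt_one_iff.1 this
  rw [hk0] at hk
  apply h0
  have : ((0:ℤ):ℝ) = 0 := by simp
  linarith

theorem polygon_bound (K : AddCircle (1 : ℝ) → EuclideanSpace ℝ (Fin 3))
    (hinj : Function.Injective K) (T : ℝ)
    (hb : ∀ m u, LoopInscribed m u → loopPolyTC K m u ≤ T) (n : ℕ) (hn : 2 ≤ n) :
    ∑ i ∈ Finset.range n, InnerProductGeometry.angle
      (K (((i+1 : ℕ):ℝ)/n : ℝ) - K (((i:ℕ):ℝ)/n : ℝ))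
      (K (((i+2 : ℕ):ℝ)/n : ℝ) - K (((i+1 : ℕ):ℝ)/n : ℝ)) ≤ T := by
  obtain ⟨m, rfl⟩ : ∃ m, n = m + 1 := ⟨n - 1, by omega⟩
  set N : ℝ := ((m+1 : ℕ) : ℝ) with hN
  have hNpos : 0 < N := by positivity
  have hI : LoopInscribed m (fun i => (i:ℝ)/N) := by
    constructor
    · intro i _
      simp only []
      gcongr
      simp
    · intro i hi
      refine ⟨by positivity, ?_⟩
      rw [div_lt_one hNpos, hN]
      exact_mod_cast Nat.lt_succ_of_le hi
  have h := hb m _ hI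
  set w : ℕ → EuclideanSpace ℝ (Fin 3) := fun i => K (((i:ℝ)/N : ℝ)) with hw
  have hl : loopVertexList K m (fun i => (i:ℝ)/N) = (List.range (m+1)).map w := rfl
  have hinjOn : ∀ i < m + 1, ∀ j < m + 1, w i = w j → i = j := by
    intro i hi j hj hij
    by_contra hne
    refine coe_ne_of_abs_lt ?_ ?_ (hinj hij)
    · intro h
      rw [div_left_inj' hNpos.ne'] at h
      exact hne (by exact_mod_cast h)
    · rw [← sub_div, abs_div, abs_of_pos hNpos, div_lt_one hNpos, abs_lt, hN]
      have a1 : (i:ℝ) < ((m+1:ℕ):ℝ) := by exact_mod_cast hi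
      have a2 : (j:ℝ) < ((m+1:ℕ):ℝ) := by exact_mod_cast hj
      have a3 : (0:ℝ) ≤ i := by positivity
      have a4 : (0:ℝ) ≤ j := by positivity
      constructor <;> linarith
  have hnd : ((List.range (m+1)).map w).Nodup := by
    refine List.Nodup.map_on ?_ List.nodup_range
    intro i hi j hj hij
    exact hinjOn i (List.mem_range.1 hi) j (List.mem_range.1 hj) hij
  have hcol : collapse ((List.range (m+1)).map w) = (List.range (m+1)).map w := by
    unfold collapse
    exact @List.destutter_of_isChain _ _ (Classical.decRel _) _ (List.Pairwise.isChain hnd)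
  have hcc : cyclicCollapse ((List.range (m+1)).map w) = (List.range (m+1)).map w := by
    unfold cyclicCollapse
    rw [hcol, if_neg]
    rintro ⟨-, h⟩
    rw [List.head?_map, List.getLast?_map, List.getLast?_range, List.head?_range] at h
    simp only [Nat.add_eq_zero_iff, one_ne_zero, and_false, if_false, Option.map_some,
      Option.some.injEq, Nat.add_sub_cancel] at h
    have := hinjOn m (by omega) 0 (by omega) h
    omega
  have hper : ∀ i, w (m + 1 + i) = w i := by
    intro i
    simp only [hw]
    congr 1
    have : ((m + 1 + i : ℕ) : ℝ) / N = (i:ℝ)/N + 1 := by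
      rw [hN]; push_cast; field_simp; ring
    rw [this]
    exact AddCircle.coe_add_period 1 _
  have hcat : (List.range (m+1)).map w ++ ((List.range (m+1)).map w).take 2
      = (List.range (m + 1 + 2)).map w := by
    rw [List.range_add (n := m + 1) (m := 2), List.map_append, List.map_map, ← List.map_take, List.take_range]
    congr 1
    rw [min_eq_left hn]
    apply List.map_congr_left
    intro i _
    exact (hper i).symm
  unfold loopPolyTC at h
  rw [hl, hcc, hcat, turnSum_map_range] at h
  exact h

/-- number of sign changes of the polygon with `n` vertices in direction `x` -/
def signSet (K : AddCircle (1 : ℝ) → EuclideanSpace ℝ (Fin 3)) (n i : ℕ) :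
    Set (EuclideanSpace ℝ (Fin 3)) :=
  {x | ⟪K (((i+1 : ℕ):ℝ)/n : ℝ) - K (((i:ℕ):ℝ)/n : ℝ), x⟫ *
      ⟪K (((i+2 : ℕ):ℝ)/n : ℝ) - K (((i+1 : ℕ):ℝ)/n : ℝ), x⟫ < 0}

theorem ae_inner_ne_zero (a : EuclideanSpace ℝ (Fin 3)) (ha : a ≠ 0) :
    ∀ᵐ x : EuclideanSpace ℝ (Fin 3), ⟪a, x⟫ ≠ 0 := by
  rw [ae_iff]
  have := Measure.addHaar_submodule (volume : Measure (EuclideanSpace ℝ (Fin 3)))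
    (LinearMap.ker (innerSL ℝ a).toLinearMap) (by
      intro h
      have : a ∈ LinearMap.ker (innerSL ℝ a).toLinearMap := by rw [h]; trivial
      simp at this
      exact ha this)
  convert this using 2
  ext x
  simp

theorem exists_direction (K : AddCircle (1 : ℝ) → EuclideanSpace ℝ (Fin 3))
    (hinj : Function.Injective K) (T : ℝ) (hT : T < 4 * Real.pi)
    (hb : ∀ m u, LoopInscribed m u → loopPolyTC K m u ≤ T) :
    ∃ x : EuclideanSpace ℝ (Fin 3), x 1 ≠ 0 ∧
      (∀ p q : ℚ, K (p:ℝ) ≠ K (q:ℝ) → ⟪K (p:ℝ) - K (q:ℝ), x⟫ ≠ 0) ∧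
      ∃ᶠ n in atTop, (∑ i ∈ Finset.range n, (signSet K n i).indicator (1 : EuclideanSpace ℝ (Fin 3) → ℝ≥0∞) x) < 4 := by
  have hpi := Real.pi_pos
  set B : Set (EuclideanSpace ℝ (Fin 3)) := {x | ‖x‖ < 1} with hB
  have mB : MeasurableSet B := measurableSet_lt (by fun_prop) (by fun_prop)
  have hBball : B = Metric.ball 0 1 := by ext x; simp [hB]
  have hVpos : volume B ≠ 0 := by
    rw [hBball]; exact (Metric.measure_ball_pos volume _ one_pos).ne'
  have hVfin : volume B ≠ ∞ := by
    rw [hBball]; exact measure_ball_lt_top.ne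
  set μ := (volume : Measure (EuclideanSpace ℝ (Fin 3))).restrict B with hμ
  have hmeas : ∀ n i, MeasurableSet (signSet K n i) := fun n i =>
    measurableSet_lt (by fun_prop) (by fun_prop)
  set f : ℕ → EuclideanSpace ℝ (Fin 3) → ℝ≥0∞ := fun n x =>
    ∑ i ∈ Finset.range n, (signSet K n i).indicator (1 : EuclideanSpace ℝ (Fin 3) → ℝ≥0∞) x with hf
  have mf : ∀ n, Measurable (f n) := fun n =>
    Finset.measurable_sum _ fun i _ => measurable_one.indicator (hmeas n i)
  have h_integral : ∀ n ≥ 2, ∫⁻ x, f n x ∂μ ≤ ENNReal.ofReal (T / Real.pi) * volume B := by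
    intro n hn
    rw [lintegral_finsetSum _ fun i _ => measurable_one.indicator (hmeas n i)]
    have hnpos : (0:ℝ) < n := by positivity
    have hedge : ∀ i : ℕ, K (((i+1 : ℕ):ℝ)/n : ℝ) - K (((i:ℕ):ℝ)/n : ℝ) ≠ 0 := by
      intro i h
      rw [sub_eq_zero] at h
      have e : ((i+1 : ℕ):ℝ)/n - ((i:ℕ):ℝ)/n = 1/n := by push_cast; ring
      refine coe_ne_of_abs_lt ?_ ?_ (hinj h)
      · intro h; rw [← sub_eq_zero, e] at h
        have : (0:ℝ) < 1/n := by positivity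
        linarith
      · rw [e, abs_of_pos (by positivity), div_lt_one hnpos]
        exact_mod_cast hn
    calc ∑ i ∈ Finset.range n, ∫⁻ x, (signSet K n i).indicator (1 : EuclideanSpace ℝ (Fin 3) → ℝ≥0∞) x ∂μ
        ≤ ∑ i ∈ Finset.range n, ENNReal.ofReal (InnerProductGeometry.angle
            (K (((i+1 : ℕ):ℝ)/n : ℝ) - K (((i:ℕ):ℝ)/n : ℝ))
            (K (((i+2 : ℕ):ℝ)/n : ℝ) - K (((i+1 : ℕ):ℝ)/n : ℝ)) / Real.pi) * volume B := by
          refine Finset.sum_le_sum fun i _ => ?_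
          rw [lintegral_indicator_one (hmeas n i), hμ, Measure.restrict_apply (hmeas n i),
            Set.inter_comm]
          exact lune_bound _ _ (hedge i) (hedge (i+1))
      _ = ENNReal.ofReal ((∑ i ∈ Finset.range n, InnerProductGeometry.angle
            (K (((i+1 : ℕ):ℝ)/n : ℝ) - K (((i:ℕ):ℝ)/n : ℝ))
            (K (((i+2 : ℕ):ℝ)/n : ℝ) - K (((i+1 : ℕ):ℝ)/n : ℝ))) / Real.pi) * volume B := by
          rw [← Finset.sum_mul, Finset.sum_div, ENNReal.ofReal_sum_of_nonneg]
          intro i _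
          exact div_nonneg (InnerProductGeometry.angle_nonneg _ _) hpi.le
      _ ≤ _ := by
          gcongr
          exact polygon_bound K hinj T hb n hn
  have hlim : ∫⁻ x, liminf (fun n => f n x) atTop ∂μ < 4 * volume B := by
    refine (lintegral_liminf_le mf).trans_lt ?_
    refine lt_of_le_of_lt (b := ENNReal.ofReal (T / Real.pi) * volume B) ?_ ?_
    · refine (liminf_le_liminf (v := fun _ => ENNReal.ofReal (T / Real.pi) * volume B) ?_).trans ?_
      · filter_upwards [eventually_ge_atTop 2] with n hn using h_integral n hn
      · simp
    · refine ENNReal.mul_lt_mul_left hVpos hVfin ?_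
      have : (4 : ℝ≥0∞) = ENNReal.ofReal 4 := by simp
      rw [this]
      refine (ENNReal.ofReal_lt_ofReal_iff (by norm_num)).2 ?_
      rw [div_lt_iff₀ hpi]; exact hT
  by_contra hcon
  push Not at hcon
  have hae : ∀ᵐ x ∂μ, (4 : ℝ≥0∞) ≤ liminf (fun n => f n x) atTop := by
    have h1 : ∀ᵐ x : EuclideanSpace ℝ (Fin 3), x 1 ≠ 0 := by
      filter_upwards [ae_inner_ne_zero (EuclideanSpace.single 1 (1:ℝ)) (by simp)] with x hx
      simpa [EuclideanSpace.inner_single_left] using hx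
    have h2 : ∀ᵐ x : EuclideanSpace ℝ (Fin 3), ∀ p q : ℚ, K (p:ℝ) ≠ K (q:ℝ) →
        ⟪K (p:ℝ) - K (q:ℝ), x⟫ ≠ 0 := by
      rw [ae_all_iff]; intro p
      rw [ae_all_iff]; intro q
      by_cases h : K (p:ℝ) = K (q:ℝ)
      · simp [h]
      · filter_upwards [ae_inner_ne_zero _ (sub_ne_zero.2 h)] with x hx _ using hx
    filter_upwards [ae_restrict_of_ae h1, ae_restrict_of_ae h2] with x hx1 hx2
    by_contra hlt
    push Not at hlt
    obtain ⟨n, l1, l2⟩ := ((frequently_lt_of_liminf_lt (by isBoundedDefault) hlt).and_eventually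
      (hcon x hx1 hx2)).exists
    exact absurd l1 (not_lt.2 l2)
  have := lintegral_mono_ae hae
  rw [lintegral_const, hμ, Measure.restrict_apply_univ] at this
  exact absurd hlim (not_lt.2 this)


theorem exists_change (d : ℤ → ℝ) (hd : ∀ i, d i ≠ 0) (a : ℤ) (k : ℕ)
    (h : d a * d (a + k) < 0) : ∃ j, a ≤ j ∧ j < a + k ∧ d j * d (j + 1) < 0 := by
  induction k with
  | zero => simp at h; nlinarith [mul_self_nonneg (d a)]
  | succ k ih =>
    by_cases hk : d a * d (a + k) < 0
    · obtain ⟨j, h1, h2, h3⟩ := ih hk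
      exact ⟨j, h1, by push_cast; omega, h3⟩
    · refine ⟨a + k, by omega, by push_cast; omega, ?_⟩
      push Not at hk
      have e : a + ((k + 1 : ℕ) : ℤ) = a + k + 1 := by push_cast; ring
      rw [e] at h
      have hpos : 0 < d a * d (a + k) := lt_of_le_of_ne hk (mul_ne_zero (hd _) (hd _)).symm
      have h4 : (d a * d (a + k)) * (d a * d (a + k + 1)) < 0 := mul_neg_of_pos_of_neg hpos h
      have h5 : (d a)^2 * (d (a+k) * d (a+k+1)) < 0 := by linarith [h4, show (d a)^2 * (d (a+k) * d (a+k+1)) = (d a * d (a + k)) * (d a * d (a + k + 1)) by ring]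
      by_contra hc
      push Not at hc
      have := mul_nonneg (sq_nonneg (d a)) hc
      linarith

theorem exists_change' (d : ℤ → ℝ) (hd : ∀ i, d i ≠ 0) (a b : ℤ) (hab : a ≤ b)
    (h : d a * d b < 0) : ∃ j, a ≤ j ∧ j < b ∧ d j * d (j + 1) < 0 := by
  obtain ⟨k, rfl⟩ : ∃ k : ℕ, b = a + k := ⟨(b - a).toNat, by omega⟩
  exact exists_change d hd a k h

theorem exists_pos_step (g : ℤ → ℝ) (a : ℤ) (k : ℕ) (h : g a < g (a + k)) :
    ∃ j, a ≤ j ∧ j < a + k ∧ 0 < g (j + 1) - g j := by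
  by_contra hc
  push Not at hc
  have : ∀ i : ℕ, i ≤ k → g (a + i) ≤ g a := by
    intro i
    induction i with
    | zero => simp
    | succ i ih =>
      intro hi
      have h1 := ih (by omega)
      have h2 := hc (a + i) (by omega) (by omega)
      push_cast
      rw [← add_assoc]
      linarith
  have := this k le_rfl
  linarith

theorem exists_pos_step' (g : ℤ → ℝ) (a b : ℤ) (hab : a ≤ b) (h : g a < g b) :
    ∃ j, a ≤ j ∧ j < b ∧ 0 < g (j + 1) - g j := by
  obtain ⟨k, rfl⟩ : ∃ k : ℕ, b = a + k := ⟨(b - a).toNat, by omega⟩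
  exact exists_pos_step g a k h

theorem exists_neg_step' (g : ℤ → ℝ) (a b : ℤ) (hab : a ≤ b) (h : g b < g a) :
    ∃ j, a ≤ j ∧ j < b ∧ g (j + 1) - g j < 0 := by
  obtain ⟨j, h1, h2, h3⟩ := exists_pos_step' (fun i => - g i) a b hab (by linarith)
  exact ⟨j, h1, h2, by linarith⟩

theorem four_changes (g : ℤ → ℝ) (n : ℕ) (hn : 0 < n) (hper : ∀ i, g (i + n) = g i)
    (hd : ∀ i, g (i + 1) - g i ≠ 0) (a b c e : ℤ) (hab : a ≤ b) (hbc : b ≤ c) (hce : c ≤ e)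
    (hea : e ≤ a + n) (h1 : g a < g b) (h2 : g c < g b) (h3 : g c < g e) (h4 : g a < g e) :
    4 ≤ ((Finset.range n).filter
      (fun i : ℕ => (g (i+1) - g i) * (g (i+2) - g (i + 1)) < 0)).card := by
  obtain ⟨i1, p1, q1, r1⟩ := exists_pos_step' g a b hab h1
  obtain ⟨i2, p2, q2, r2⟩ := exists_neg_step' g b c hbc h2
  obtain ⟨i3, p3, q3, r3⟩ := exists_pos_step' g c e hce h3
  obtain ⟨i4, p4, q4, r4⟩ := exists_neg_step' g e (a + n) hea (by rw [hper]; exact h4)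
  set d : ℤ → ℝ := fun i => g (i + 1) - g i with hdd
  have dper : ∀ i, d (i + n) = d i := by
    intro i
    simp only [hdd]
    rw [show i + (n:ℤ) + 1 = i + 1 + n by ring, hper, hper]
  have dperm : ∀ (i k : ℤ), d (i + n * k) = d i := by
    intro i k
    induction k using Int.induction_on with
    | zero => simp
    | succ k ih => rw [← ih, ← dper (i + n * k)]; ring_nf
    | pred k ih => rw [← ih, ← dper (i + n * (-k - 1))]; ring_nf
  obtain ⟨j1, s1, t1, w1⟩ := exists_change' d hd i1 i2 (by omega) (mul_neg_of_pos_of_neg r1 r2)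
  obtain ⟨j2, s2, t2, w2⟩ := exists_change' d hd i2 i3 (by omega) (mul_neg_of_neg_of_pos r2 r3)
  obtain ⟨j3, s3, t3, w3⟩ := exists_change' d hd i3 i4 (by omega) (mul_neg_of_pos_of_neg r3 r4)
  obtain ⟨j4, s4, t4, w4⟩ := exists_change' d hd i4 (i1 + n) (by omega)
    (by rw [dper]; exact mul_neg_of_neg_of_pos r4 r1)
  have hn' : (n:ℤ) ≠ 0 := by omega
  have hmem : ∀ j : ℤ, d j * d (j+1) < 0 → (j % n).toNat ∈ (Finset.range n).filter
      (fun i : ℕ => (g (i+1) - g i) * (g (i+2) - g (i + 1)) < 0) := by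
    intro j hj
    have e1 : (((j % n).toNat : ℕ) : ℤ) = j % n := Int.toNat_of_nonneg (Int.emod_nonneg _ hn')
    have e2 : j = j % n + n * (j / n) := (Int.emod_add_mul_ediv j n).symm
    rw [Finset.mem_filter, Finset.mem_range]
    constructor
    · have := Int.emod_lt_of_pos j (show (0:ℤ) < n by omega)
      omega
    · have e3 : d j = d (j % n) := by conv_lhs => rw [e2]; rw [dperm]
      have e4 : d (j+1) = d (j % n + 1) := by
        conv_lhs => rw [e2, show j % n + n * (j / n) + 1 = j % n + 1 + n * (j / n) by ring]
        rw [dperm]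
      rw [e3, e4] at hj
      rw [e1]
      simp only [hdd] at hj
      rw [show j % (n:ℤ) + 2 = j % n + 1 + 1 by ring]
      exact hj
  have hne : ∀ j j' : ℤ, j < j' → j' < j + n → (j % n).toNat ≠ (j' % n).toNat := by
    intro j j' hlt hlt' heq
    have e1 := Int.emod_nonneg j hn'
    have e2 := Int.emod_nonneg j' hn'
    have e3 : j % n = j' % n := by omega
    have e4 := Int.emod_emod_of_dvd
    have : (n:ℤ) ∣ j' - j := Int.dvd_of_emod_eq_zero (Int.emod_eq_emod_iff_emod_sub_eq_zero.1 e3.symm)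
    have := Int.le_of_dvd (by omega) this
    omega
  have hsub : ({(j1 % n).toNat, (j2 % n).toNat, (j3 % n).toNat, (j4 % n).toNat} : Finset ℕ) ⊆
      (Finset.range n).filter (fun i : ℕ => (g (i+1) - g i) * (g (i+2) - g (i + 1)) < 0) := by
    intro x hx
    simp only [Finset.mem_insert, Finset.mem_singleton] at hx
    rcases hx with rfl | rfl | rfl | rfl
    · exact hmem _ w1
    · exact hmem _ w2
    · exact hmem _ w3
    · exact hmem _ w4
  have hcard : ({(j1 % n).toNat, (j2 % n).toNat, (j3 % n).toNat, (j4 % n).toNat} : Finset ℕ).card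
      = 4 := by
    have n12 := hne j1 j2 (by omega) (by omega)
    have n13 := hne j1 j3 (by omega) (by omega)
    have n14 := hne j1 j4 (by omega) (by omega)
    have n23 := hne j2 j3 (by omega) (by omega)
    have n24 := hne j2 j4 (by omega) (by omega)
    have n34 := hne j3 j4 (by omega) (by omega)
    rw [Finset.card_insert_of_notMem, Finset.card_insert_of_notMem, Finset.card_insert_of_notMem,
      Finset.card_singleton]
    · simpa using n34
    · simp only [Finset.mem_insert, Finset.mem_singleton, not_or]; exact ⟨n23, n24⟩
    · simp only [Finset.mem_insert, Finset.mem_singleton, not_or]; exact ⟨n12, n13, n14⟩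
  rw [← hcard]
  exact Finset.card_le_card hsub

theorem no_M (K : AddCircle (1 : ℝ) → EuclideanSpace ℝ (Fin 3)) (hK : Continuous K)
    (hinj : Function.Injective K) (x : EuclideanSpace ℝ (Fin 3))
    (hgen : ∀ p q : ℚ, K (p:ℝ) ≠ K (q:ℝ) → ⟪K (p:ℝ) - K (q:ℝ), x⟫ ≠ 0)
    (hfreq : ∃ᶠ n in atTop, (∑ i ∈ Finset.range n,
      (signSet K n i).indicator (1 : EuclideanSpace ℝ (Fin 3) → ℝ≥0∞) x) < 4)
    (h : ℝ → ℝ) (hh : h = fun t : ℝ => ⟪K (t : AddCircle (1:ℝ)), x⟫)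
    (t1 t2 t3 t4 : ℝ) (l12 : t1 < t2) (l23 : t2 < t3) (l34 : t3 < t4) (l41 : t4 < t1 + 1)
    (h1 : h t1 < h t2) (h2 : h t3 < h t2) (h3 : h t3 < h t4) (h4 : h t1 < h t4) : False := by
  have hcont : Continuous h := by
    rw [hh]
    exact (hK.comp (AddCircle.continuous_mk' 1)).inner continuous_const
  have ht : ∀ t : ℝ, Tendsto (fun n : ℕ => ((⌈t * n⌉ : ℤ) : ℝ) / n) atTop (nhds t) := by
    intro t
    have hlim : Tendsto (fun n : ℕ => t + 1 / (n:ℝ)) atTop (nhds t) := by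
      simpa using tendsto_const_nhds.add (tendsto_one_div_atTop_nhds_zero_nat (𝕜 := ℝ))
    refine tendsto_of_tendsto_of_tendsto_of_le_of_le' tendsto_const_nhds hlim ?_ ?_
    · filter_upwards [eventually_gt_atTop 0] with n hn
      have hnpos : (0:ℝ) < n := by exact_mod_cast hn
      rw [le_div_iff₀ hnpos]
      exact Int.le_ceil _
    · filter_upwards [eventually_gt_atTop 0] with n hn
      have hnpos : (0:ℝ) < n := by exact_mod_cast hn
      rw [div_le_iff₀ hnpos, add_mul, div_mul_cancel₀ _ hnpos.ne']
      exact (Int.ceil_lt_add_one _).le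
  have hht : ∀ t : ℝ, Tendsto (fun n : ℕ => h (((⌈t * n⌉ : ℤ) : ℝ) / n)) atTop (nhds (h t)) :=
    fun t => (hcont.tendsto t).comp (ht t)
  obtain ⟨n, hn4, hn2, e1, e2, e3, e4⟩ := (hfreq.and_eventually
    ((eventually_ge_atTop 2).and <|
      ((hht t1).eventually_lt (hht t2) h1).and <|
      ((hht t3).eventually_lt (hht t2) h2).and <|
      ((hht t3).eventually_lt (hht t4) h3).and <|
      ((hht t1).eventually_lt (hht t4) h4))).exists
  have hnpos : (0:ℝ) < n := by positivity
  set g : ℤ → ℝ := fun i => h ((i:ℝ)/n) with hg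
  have hc := four_changes g n (by omega) (by
      intro i
      simp only [hg, hh]
      have : (((i + n : ℤ) : ℝ)) / n = (i:ℝ)/n + 1 := by push_cast; field_simp
      rw [this, AddCircle.coe_add_period])
    (by
      intro i
      have e : ((i+1 : ℤ):ℝ)/n - ((i:ℤ):ℝ)/n = 1/n := by push_cast; ring
      have hne : K (((((i+1 : ℤ) : ℚ) / n : ℚ) : ℝ) : ℝ) ≠ K (((((i : ℤ) : ℚ) / n : ℚ) : ℝ) : ℝ) := by
        intro hKK
        push_cast at hKK e
        refine coe_ne_of_abs_lt ?_ ?_ (hinj hKK)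
        · intro h; rw [← sub_eq_zero, e] at h
          have : (0:ℝ) < 1/n := by positivity
          linarith
        · rw [e, abs_of_pos (by positivity), div_lt_one hnpos]
          exact_mod_cast hn2
      have := hgen _ _ hne
      rw [inner_sub_left] at this
      simp only [hg, hh]
      push_cast at this ⊢
      exact this)
    ⌈t1 * n⌉ ⌈t2 * n⌉ ⌈t3 * n⌉ ⌈t4 * n⌉ (Int.ceil_mono (by gcongr)) (Int.ceil_mono (by gcongr))
    (Int.ceil_mono (by gcongr)) (by
      rw [← Int.ceil_add_natCast]
      apply Int.ceil_mono
      nlinarith) e1 e2 e3 e4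
  have hs : (((Finset.range n).filter
      (fun i : ℕ => (g (i+1) - g i) * (g (i+2) - g (i + 1)) < 0)).card : ℝ≥0∞) =
      ∑ i ∈ Finset.range n, (signSet K n i).indicator (1 : EuclideanSpace ℝ (Fin 3) → ℝ≥0∞) x := by
    rw [Finset.card_filter]
    push_cast
    refine Finset.sum_congr rfl fun i _ => ?_
    have hiff : x ∈ signSet K n i ↔ (g (i+1) - g i) * (g (i+2) - g (i + 1)) < 0 := by
      simp only [signSet, Set.mem_ofPred_eq, hg, hh, inner_sub_left]
      push_cast
      rfl
    by_cases hx : x ∈ signSet K n i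
    · rw [Set.indicator_of_mem hx, if_pos (hiff.1 hx)]; rfl
    · rw [Set.indicator_of_notMem hx, if_neg (fun h => hx (hiff.2 h))]
  rw [← hs] at hn4
  have : (((Finset.range n).filter
      (fun i : ℕ => (g (i+1) - g i) * (g (i+2) - g (i + 1)) < 0)).card) < 4 := by
    exact_mod_cast hn4
  omega

theorem unimodal (h : ℝ → ℝ) (hcont : Continuous h) (hper : ∀ t, h (t + 1) = h t)
    (hnc : ∀ a b, a < b → ∃ p ∈ Icc a b, ∃ q ∈ Icc a b, h p ≠ h q)
    (hM : ∀ t1 t2 t3 t4, t1 < t2 → t2 < t3 → t3 < t4 → t4 < t1 + 1 →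
      h t1 < h t2 → h t3 < h t2 → h t3 < h t4 → h t1 < h t4 → False) :
    ∃ s p, s < p ∧ p < s + 1 ∧ StrictMonoOn h (Icc s p) ∧ StrictAntiOn h (Icc p (s+1)) := by
  obtain ⟨s, -, hs⟩ := isCompact_Icc.exists_isMinOn (nonempty_Icc.2 (zero_le_one (α := ℝ)))
    hcont.continuousOn
  have hmin : ∀ t, h s ≤ h t := by
    intro t
    have hp : Function.Periodic h 1 := hper
    obtain ⟨y, hy, hty⟩ := hp.exists_mem_Ico₀ one_pos t
    rw [hty]; exact hs ⟨hy.1, hy.2.le⟩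
  obtain ⟨p, hp, hpm⟩ := isCompact_Icc.exists_isMaxOn (nonempty_Icc.2 (by linarith : s ≤ s + 1))
    hcont.continuousOn
  have hmax : ∀ t ∈ Icc s (s+1), h t ≤ h p := fun t ht => hpm ht
  have hlt : h s < h p := by
    obtain ⟨a, ha, b, hb, hne⟩ := hnc s (s+1) (by linarith)
    rcases lt_or_gt_of_ne hne with hl | hl
    · linarith [hmin a, hmax b hb]
    · linarith [hmin b, hmax a ha]
  have hsp : s < p := lt_of_le_of_ne hp.1 (by rintro rfl; exact lt_irrefl _ hlt)
  have hps : p < s + 1 := lt_of_le_of_ne hp.2 (by rintro rfl; rw [hper] at hlt; exact lt_irrefl _ hlt)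
  have hmono : MonotoneOn h (Icc s p) := by
    intro a ha b hb hab
    by_contra hcon
    push Not at hcon
    have hab' : a < b := lt_of_le_of_ne hab (by rintro rfl; exact lt_irrefl _ hcon)
    have hma := hmin b
    have hmb := hmax a ⟨ha.1, by linarith [ha.2]⟩
    refine hM s a b p (lt_of_le_of_ne ha.1 ?_) hab' (lt_of_le_of_ne hb.2 ?_) hps (by linarith)
      hcon (by linarith) hlt
    · rintro rfl; linarith
    · rintro rfl; linarith
  have hanti : AntitoneOn h (Icc p (s+1)) := by
    intro a ha b hb hab
    by_contra hcon
    push Not at hcon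
    have hab' : a < b := lt_of_le_of_ne hab (by rintro rfl; exact lt_irrefl _ hcon)
    have hma := hmin a
    have hmb := hmax b ⟨by linarith [hb.1], hb.2⟩
    refine hM s p a b hsp (lt_of_le_of_ne ha.1 ?_) hab' (lt_of_le_of_ne hb.2 ?_) hlt
      (by linarith) hcon (by linarith)
    · rintro rfl; linarith
    · rintro rfl; rw [hper] at hcon; linarith
  refine ⟨s, p, hsp, hps, ?_, ?_⟩
  · intro a ha b hb hab
    refine lt_of_le_of_ne (hmono ha hb hab.le) fun heq => ?_
    obtain ⟨u, hu, v, hv, hne⟩ := hnc a b hab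
    have k1 := hmono ha ⟨by linarith [ha.1, hu.1], by linarith [hb.2, hu.2]⟩ hu.1
    have k2 := hmono ⟨by linarith [ha.1, hu.1], by linarith [hb.2, hu.2]⟩ hb hu.2
    have k3 := hmono ha ⟨by linarith [ha.1, hv.1], by linarith [hb.2, hv.2]⟩ hv.1
    have k4 := hmono ⟨by linarith [ha.1, hv.1], by linarith [hb.2, hv.2]⟩ hb hv.2
    exact hne (by linarith)
  · intro a ha b hb hab
    refine lt_of_le_of_ne (hanti ha hb hab.le) fun heq => ?_
    obtain ⟨u, hu, v, hv, hne⟩ := hnc a b hab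
    have k1 := hanti ha ⟨by linarith [ha.1, hu.1], by linarith [hb.2, hu.2]⟩ hu.1
    have k2 := hanti ⟨by linarith [ha.1, hu.1], by linarith [hb.2, hu.2]⟩ hb hu.2
    have k3 := hanti ha ⟨by linarith [ha.1, hv.1], by linarith [hb.2, hv.2]⟩ hv.1
    have k4 := hanti ⟨by linarith [ha.1, hv.1], by linarith [hb.2, hv.2]⟩ hb hv.2
    exact hne (by linarith)

theorem exists_unimodal_direction (K : AddCircle (1 : ℝ) → EuclideanSpace ℝ (Fin 3))
    (hK : Continuous K) (hinj : Function.Injective K) (T : ℝ) (hT : T < 4 * Real.pi)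
    (hb : ∀ m u, LoopInscribed m u → loopPolyTC K m u ≤ T) :
    ∃ x : EuclideanSpace ℝ (Fin 3), x 1 ≠ 0 ∧ ∃ s p, s < p ∧ p < s + 1 ∧
      StrictMonoOn (fun t : ℝ => ⟪K (t : AddCircle (1:ℝ)), x⟫) (Icc s p) ∧
      StrictAntiOn (fun t : ℝ => ⟪K (t : AddCircle (1:ℝ)), x⟫) (Icc p (s+1)) := by
  obtain ⟨x, hx, hgen, hfreq⟩ := exists_direction K hinj T hT hb
  refine ⟨x, hx, unimodal _ ?_ ?_ ?_ ?_⟩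
  · exact (hK.comp (AddCircle.continuous_mk' 1)).inner continuous_const
  · intro t
    rw [AddCircle.coe_add_period]
  · intro a b hab
    obtain ⟨p, hp1, hp2⟩ := exists_rat_btwn (lt_min hab (by linarith : a < a + 1))
    obtain ⟨q, hq1, hq2⟩ := exists_rat_btwn hp2
    have m1 := min_le_left b (a+1)
    have m2 := min_le_right b (a+1)
    refine ⟨p, ⟨hp1.le, by linarith⟩, q, ⟨by linarith, by linarith⟩, ?_⟩
    have := hgen p q (fun h => coe_ne_of_abs_lt hq1.ne
      (by rw [abs_lt]; constructor <;> linarith) (hinj h))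
    rw [inner_sub_left] at this
    exact sub_ne_zero.1 this
  · exact no_M K hK hinj x hgen hfreq _ rfl


/-- Ambient isotopy of subsets. -/
def AmbIso {X : Type*} [TopologicalSpace X] (A B : Set X) : Prop :=
  ∃ H : ℝ × X → X, ContinuousOn H (Set.Icc (0 : ℝ) 1 ×ˢ Set.univ) ∧
    (∀ x, H (0, x) = x) ∧
    (∀ t ∈ Set.Icc (0 : ℝ) 1, IsHomeomorph fun x => H (t, x)) ∧
    (fun x => H (1, x)) '' A = B

theorem AmbIso.trans {X : Type*} [TopologicalSpace X] {A B C : Set X} (h1 : AmbIso A B)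
    (h2 : AmbIso B C) : AmbIso A C := by
  obtain ⟨H, cH, zH, hH, iH⟩ := h1
  obtain ⟨G, cG, zG, hG, iG⟩ := h2
  refine ⟨fun p => G (p.1, H p), ?_, ?_, ?_, ?_⟩
  · refine cG.comp (continuousOn_fst.prodMk cH) ?_
    rintro ⟨t, x⟩ ⟨ht, -⟩
    exact ⟨ht, mem_univ _⟩
  · intro x; simp only [zH, zG]
  · intro t ht
    exact (hG t ht).comp (hH t ht)
  · rw [← iG, ← iH, Set.image_image]

theorem AmbIso.transfer {X Y : Type*} [TopologicalSpace X] [TopologicalSpace Y] (e : X ≃ₜ Y)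
    {A B : Set X} (h : AmbIso (e '' A) (e '' B)) : AmbIso A B := by
  obtain ⟨H, cH, zH, hH, iH⟩ := h
  refine ⟨fun p => e.symm (H (p.1, e p.2)), ?_, ?_, ?_, ?_⟩
  · refine e.symm.continuous.comp_continuousOn (cH.comp (by fun_prop) ?_)
    rintro ⟨t, x⟩ ⟨ht, -⟩
    exact ⟨ht, mem_univ _⟩
  · intro x; simp [zH]
  · intro t ht
    exact e.symm.isHomeomorph.comp ((hH t ht).comp e.isHomeomorph)
  · have : (fun x => e.symm (H (1, e x))) '' A = e.symm '' ((fun x => H (1, x)) '' (e '' A)) := by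
      simp only [Set.image_image]
    simp only []
    rw [this, iH, Set.image_image]
    simp

theorem AmbIso.of_inverse {X : Type*} [TopologicalSpace X] {A B : Set X} (H G : ℝ × X → X)
    (cH : ContinuousOn H (Set.Icc (0 : ℝ) 1 ×ˢ Set.univ))
    (cG : ContinuousOn G (Set.Icc (0 : ℝ) 1 ×ˢ Set.univ))
    (zH : ∀ x, H (0, x) = x)
    (l : ∀ t ∈ Set.Icc (0 : ℝ) 1, ∀ x, G (t, H (t, x)) = x)
    (r : ∀ t ∈ Set.Icc (0 : ℝ) 1, ∀ x, H (t, G (t, x)) = x)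
    (hi : (fun x => H (1, x)) '' A = B) : AmbIso A B := by
  refine ⟨H, cH, zH, ?_, hi⟩
  intro t ht
  rw [isHomeomorph_iff_exists_inverse]
  have key : ∀ F : ℝ × X → X, ContinuousOn F (Set.Icc (0 : ℝ) 1 ×ˢ Set.univ) →
      Continuous fun x => F (t, x) := fun F hF =>
    hF.comp_continuous (by fun_prop) fun x => ⟨ht, mem_univ _⟩
  exact ⟨key H cH, fun x => G (t, x), l t ht, r t ht, key G cG⟩

/-- Two sheets over `[-1,1]`. -/
def Sheets (a b : ℝ → ℂ) : Set (ℂ × ℝ) :=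
  {p | p.2 ∈ Icc (-1 : ℝ) 1 ∧ (p.1 = a p.2 ∨ p.1 = b p.2)}

theorem sheets_iso (F G : ℝ → ℂ → ℝ → ℂ) (a b a' b' : ℝ → ℂ)
    (cF : ContinuousOn (fun p : ℝ × ℂ × ℝ => F p.1 p.2.1 p.2.2) (Icc (0:ℝ) 1 ×ˢ univ))
    (cG : ContinuousOn (fun p : ℝ × ℂ × ℝ => G p.1 p.2.1 p.2.2) (Icc (0:ℝ) 1 ×ˢ univ))
    (zF : ∀ w y, F 0 w y = w)
    (l : ∀ t ∈ Icc (0:ℝ) 1, ∀ w y, G t (F t w y) y = w)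
    (r : ∀ t ∈ Icc (0:ℝ) 1, ∀ w y, F t (G t w y) y = w)
    (ha : ∀ y ∈ Icc (-1:ℝ) 1, F 1 (a y) y = a' y)
    (hb : ∀ y ∈ Icc (-1:ℝ) 1, F 1 (b y) y = b' y) : AmbIso (Sheets a b) (Sheets a' b') := by
  refine AmbIso.of_inverse (fun p : ℝ × ℂ × ℝ => (F p.1 p.2.1 p.2.2, p.2.2))
    (fun p : ℝ × ℂ × ℝ => (G p.1 p.2.1 p.2.2, p.2.2)) (cF.prodMk (by fun_prop))
    (cG.prodMk (by fun_prop)) ?_ ?_ ?_ ?_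
  · rintro ⟨w, y⟩; simp [zF]
  · rintro t ht ⟨w, y⟩; simp [l t ht]
  · rintro t ht ⟨w, y⟩; simp [r t ht]
  · ext ⟨w, y⟩
    simp only [Sheets, mem_image, Set.mem_ofPred_eq, Prod.exists, Prod.mk.injEq]
    constructor
    · rintro ⟨w', y', ⟨hy, hw⟩, h1, rfl⟩
      refine ⟨hy, ?_⟩
      rcases hw with rfl | rfl
      · left; rw [← h1, ha _ hy]
      · right; rw [← h1, hb _ hy]
    · rintro ⟨hy, rfl | rfl⟩
      · exact ⟨a y, y, ⟨hy, Or.inl rfl⟩, ha y hy, rfl⟩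
      · exact ⟨b y, y, ⟨hy, Or.inr rfl⟩, hb y hy, rfl⟩

theorem ext_continuous (F : ℝ → ℂ → ℝ → ℂ) (B : ℝ → ℝ) (cB : Continuous B)
    (B0 : ∀ y ∉ Ioo (-1:ℝ) 1, B y = 0)
    (hF : ContinuousOn (fun p : ℝ × ℂ × ℝ => F p.1 p.2.1 p.2.2)
      (Icc (0:ℝ) 1 ×ˢ univ ×ˢ Ioo (-1:ℝ) 1))
    (hb : ∀ t ∈ Icc (0:ℝ) 1, ∀ w y, ‖F t w y - w‖ ≤ B y) :
    ContinuousOn (fun p : ℝ × ℂ × ℝ => F p.1 p.2.1 p.2.2) (Icc (0:ℝ) 1 ×ˢ univ) := by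
  rintro ⟨t, w, y⟩ ⟨ht, -⟩
  simp only at ht
  by_cases hy : y ∈ Ioo (-1:ℝ) 1
  · refine (hF (t, w, y) ⟨ht, mem_univ _, hy⟩).mono_of_mem_nhdsWithin ?_
    have : (univ ×ˢ univ ×ˢ Ioo (-1:ℝ) 1 : Set (ℝ × ℂ × ℝ)) ∈ nhds (t, w, y) :=
      (isOpen_univ.prod (isOpen_univ.prod isOpen_Ioo)).mem_nhds ⟨mem_univ _, mem_univ _, hy⟩
    filter_upwards [self_mem_nhdsWithin, mem_nhdsWithin_of_mem_nhds this] with p hp hp'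
    exact ⟨hp.1, mem_univ _, hp'.2.2⟩
  · have hFy : F t w y = w := by
      have := hb t ht w y
      rw [B0 y hy] at this
      exact sub_eq_zero.1 (norm_le_zero_iff.1 this)
    have h1 : Tendsto (fun p : ℝ × ℂ × ℝ => F p.1 p.2.1 p.2.2 - p.2.1)
        (nhdsWithin (t, w, y) (Icc (0:ℝ) 1 ×ˢ univ)) (nhds 0) := by
      refine squeeze_zero_norm' (a := fun p => B p.2.2) ?_ ?_
      · filter_upwards [self_mem_nhdsWithin] with p hp using hb _ hp.1 _ _
      · rw [← B0 y hy]
        exact ((cB.comp (continuous_snd.comp continuous_snd)).tendsto (t, w, y)).mono_left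
          nhdsWithin_le_nhds
    have h2 : Tendsto (fun p : ℝ × ℂ × ℝ => p.2.1)
        (nhdsWithin (t, w, y) (Icc (0:ℝ) 1 ×ˢ univ)) (nhds w) :=
      ((continuous_fst.comp continuous_snd).tendsto (t, w, y)).mono_left nhdsWithin_le_nhds
    have h3 := h1.add h2
    simp only [sub_add_cancel, zero_add] at h3
    unfold ContinuousWithinAt
    simp only [hFy]
    exact h3

theorem iso_translate (a b : ℝ → ℂ) (ca : Continuous a) (cb : Continuous b) :
    AmbIso (Sheets a b) (Sheets (fun y => (a y - b y)/2) (fun y => -((a y - b y)/2))) := by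
  refine sheets_iso (fun t w y => w - t * ((a y + b y)/2)) (fun t w y => w + t * ((a y + b y)/2))
    _ _ _ _ ?_ ?_ ?_ ?_ ?_ ?_ ?_
  · exact Continuous.continuousOn (by fun_prop)
  · exact Continuous.continuousOn (by fun_prop)
  · intro w y; simp
  · intro t _ w y; ring
  · intro t _ w y; ring
  · intro y _; push_cast; ring
  · intro y _; push_cast; ring

/-- twisting map -/
noncomputable def twist (r θ : ℝ → ℝ) (t : ℝ) (w : ℂ) (y : ℝ) : ℂ :=
  w * Complex.exp (((t * (θ y * max 0 (min 1 (2 - ‖w‖ / r y))) : ℝ) : ℂ) * Complex.I)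

theorem norm_twist (r θ : ℝ → ℝ) (t : ℝ) (w : ℂ) (y : ℝ) : ‖twist r θ t w y‖ = ‖w‖ := by
  rw [twist, norm_mul, Complex.norm_exp_ofReal_mul_I, mul_one]

theorem twist_inv (r θ : ℝ → ℝ) (t : ℝ) (w : ℂ) (y : ℝ) :
    twist r (fun y => - θ y) t (twist r θ t w y) y = w := by
  have h : twist r (fun y => - θ y) t (twist r θ t w y) y =
    twist r θ t w y * Complex.exp (((t * (- θ y * max 0 (min 1 (2 - ‖twist r θ t w y‖ / r y))) : ℝ) : ℂ)
      * Complex.I) := rfl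
  rw [h, norm_twist, twist, mul_assoc, ← Complex.exp_add]
  have : ∀ z z' : ℂ, z + z' = 0 → w * Complex.exp (z + z') = w := by
    intro z z' hz; rw [hz]; simp
  apply this
  push_cast; ring

theorem twist_cont (r θ : ℝ → ℝ) (cr : Continuous r) (cθ : ContinuousOn θ (Ioo (-1:ℝ) 1))
    (r0 : ∀ y ∉ Ioo (-1:ℝ) 1, r y = 0) (rpos : ∀ y ∈ Ioo (-1:ℝ) 1, 0 < r y)
    (θ0 : ∀ y ∉ Ioo (-1:ℝ) 1, θ y = 0) :
    ContinuousOn (fun p : ℝ × ℂ × ℝ => twist r θ p.1 p.2.1 p.2.2) (Icc (0:ℝ) 1 ×ˢ univ) := by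
  refine ext_continuous _ (fun y => 4 * r y) (by fun_prop) ?_ ?_ ?_
  · intro y hy; simp [r0 y hy]
  · have h1 : ContinuousOn (fun p : ℝ × ℂ × ℝ => θ p.2.2) (Icc (0:ℝ) 1 ×ˢ univ ×ˢ Ioo (-1:ℝ) 1) :=
      cθ.comp (by fun_prop) (fun p hp => hp.2.2)
    have h2 : ContinuousOn (fun p : ℝ × ℂ × ℝ => ‖p.2.1‖ / r p.2.2)
        (Icc (0:ℝ) 1 ×ˢ univ ×ˢ Ioo (-1:ℝ) 1) :=
      ContinuousOn.div (by fun_prop) (by fun_prop) (fun p hp => (rpos _ hp.2.2).ne')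
    have h3 : ContinuousOn (fun p : ℝ × ℂ × ℝ => max 0 (min 1 (2 - ‖p.2.1‖ / r p.2.2)))
        (Icc (0:ℝ) 1 ×ˢ univ ×ˢ Ioo (-1:ℝ) 1) :=
      (show Continuous (fun z : ℝ => max 0 (min 1 z)) by fun_prop).comp_continuousOn
        ((continuousOn_const (c := (2:ℝ))).sub h2)
    have h4 : ContinuousOn (fun p : ℝ × ℂ × ℝ => p.1 * (θ p.2.2 * max 0 (min 1 (2 - ‖p.2.1‖ / r p.2.2))))
        (Icc (0:ℝ) 1 ×ˢ univ ×ˢ Ioo (-1:ℝ) 1) := continuousOn_fst.mul (h1.mul h3)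
    unfold twist
    exact ContinuousOn.mul (by fun_prop) (Complex.continuous_exp.comp_continuousOn
      ((Complex.continuous_ofReal.comp_continuousOn h4).mul continuousOn_const))
  · intro t _ w y
    by_cases hy : y ∈ Ioo (-1:ℝ) 1
    · have hr := rpos y hy
      by_cases hw : 2 * r y ≤ ‖w‖
      · have : 2 - ‖w‖ / r y ≤ 0 := by
          rw [sub_nonpos, le_div_iff₀ hr]; exact hw
        have e : twist r θ t w y = w := by
          rw [twist, max_eq_left ((min_le_right _ _).trans this)]; simp
        rw [e]; simp; exact hr.le
      · push Not at hw
        calc ‖twist r θ t w y - w‖ ≤ ‖twist r θ t w y‖ + ‖w‖ := norm_sub_le _ _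
          _ ≤ _ := by rw [norm_twist]; linarith
    · have e : twist r θ t w y = w := by rw [twist, θ0 y hy]; simp
      rw [e, r0 y hy]; simp

theorem iso_twist (c : ℝ → ℂ) (cc : Continuous c) (c0 : ∀ y ∉ Ioo (-1:ℝ) 1, c y = 0)
    (cne : ∀ y ∈ Ioo (-1:ℝ) 1, c y ≠ 0) :
    AmbIso (Sheets c (fun y => - c y)) (Sheets (fun y => (‖c y‖ : ℂ)) (fun y => -(‖c y‖ : ℂ))) := by
  have hsc : IsSimplyConnected (Ioo (-1:ℝ) 1) := by
    have hc : ContractibleSpace (Ioo (-1:ℝ) 1) :=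
      (convex_Ioo (-1:ℝ) 1).contractibleSpace ⟨0, by simp⟩
    have : SimplyConnectedSpace (Ioo (-1:ℝ) 1) := inferInstance
    exact this
  obtain ⟨g, cg, hg⟩ := Complex.exists_continuousOn_eqOn_exp_comp hsc isOpen_Ioo
    cc.continuousOn (by rintro ⟨y, hy, h⟩; exact cne y hy h)
  set θ : ℝ → ℝ := fun y => if y ∈ Ioo (-1:ℝ) 1 then -(g y).im else 0 with hθ
  have cθ : ContinuousOn θ (Ioo (-1:ℝ) 1) := by
    refine ContinuousOn.congr (f := fun y => -(g y).im) ?_ ?_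
    · exact (Complex.continuous_im.comp_continuousOn cg).neg
    · intro y hy; simp only [hθ]; rw [if_pos hy]
  have θ0 : ∀ y ∉ Ioo (-1:ℝ) 1, θ y = 0 := fun y hy => by simp only [hθ]; rw [if_neg hy]
  have cr : Continuous fun y => ‖c y‖ := cc.norm
  have r0 : ∀ y ∉ Ioo (-1:ℝ) 1, ‖c y‖ = 0 := fun y hy => by rw [c0 y hy, norm_zero]
  have rpos : ∀ y ∈ Ioo (-1:ℝ) 1, 0 < ‖c y‖ := fun y hy => norm_pos_iff.2 (cne y hy)
  have hmain : ∀ y, twist (fun y => ‖c y‖) θ 1 (c y) y = (‖c y‖ : ℂ) := by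
    intro y
    by_cases hy : y ∈ Ioo (-1:ℝ) 1
    · have hgy : Complex.exp (g y) = c y := hg hy
      rw [twist, div_self (rpos y hy).ne']
      have : max (0:ℝ) (min 1 (2 - 1)) = 1 := by norm_num
      rw [this]
      simp only [hθ]
      rw [if_pos hy]
      conv_lhs => rw [← hgy]
      rw [← hgy, ← Complex.exp_add, Complex.norm_exp, Complex.ofReal_exp]
      congr 1
      apply Complex.ext <;> simp
    · rw [twist, c0 y hy]; simp
  refine sheets_iso (twist (fun y => ‖c y‖) θ) (twist (fun y => ‖c y‖) (fun y => - θ y)) _ _ _ _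
    (twist_cont _ _ cr cθ r0 rpos θ0)
    (twist_cont _ _ cr cθ.neg r0 rpos (fun y hy => by simp [θ0 y hy])) ?_ ?_ ?_ ?_ ?_
  · intro w y; simp [twist]
  · intro t _ w y; exact twist_inv _ _ _ _ _
  · intro t _ w y
    have := twist_inv (fun y => ‖c y‖) (fun y => - θ y) t w y
    simpa using this
  · intro y _; exact hmain y
  · intro y _
    have : twist (fun y => ‖c y‖) θ 1 (-c y) y = - twist (fun y => ‖c y‖) θ 1 (c y) y := by
      simp only [twist, norm_neg]; ring
    rw [this, hmain]

/-- radial stretching factor: `ρ * kap M r u ρ` is the piecewise linear homeo of `[0,∞)` with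
`0 ↦ 0`, `r ↦ u`, `M ↦ M` and the identity beyond `M`. -/
noncomputable def kap (M r u ρ : ℝ) : ℝ :=
  (u + (max r (min ρ M) - r) * ((M - u) / (M - r)) + (max ρ M - M)) / max ρ r

theorem kap_of_le {M r u ρ : ℝ} (hrM : r < M) (h : ρ ≤ r) : kap M r u ρ = u / r := by
  unfold kap
  rw [max_eq_right h, max_eq_left ((min_le_left _ _).trans h), max_eq_right (h.trans hrM.le)]
  simp

theorem kap_of_mid {M r u ρ : ℝ} (h : r ≤ ρ) (h' : ρ ≤ M) :
    kap M r u ρ = (u + (ρ - r) * ((M - u) / (M - r))) / ρ := by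
  unfold kap
  rw [min_eq_left h', max_eq_right h, max_eq_right h', max_eq_left h]
  simp

theorem kap_of_ge {M r u ρ : ℝ} (hr : 0 < r) (hrM : r < M) (h : M ≤ ρ) : kap M r u ρ = 1 := by
  unfold kap
  have h1 : 0 < M - r := by linarith
  rw [min_eq_right h, max_eq_right hrM.le, max_eq_left h, max_eq_left (hrM.le.trans h)]
  have : 0 < ρ := by linarith
  field_simp
  ring

theorem kap_inv {M r u ρ : ℝ} (hr : 0 < r) (hrM : r < M) (hu : 0 < u) (huM : u < M) :
    0 < kap M r u ρ ∧ (kap M u r (ρ * kap M r u ρ)) * kap M r u ρ = 1 := by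
  have h1 : 0 < M - r := by linarith
  have h2 : 0 < M - u := by linarith
  rcases le_total ρ r with h | h
  · rw [kap_of_le hrM h]
    refine ⟨by positivity, ?_⟩
    have : ρ * (u / r) ≤ u := by
      rw [mul_div_assoc', div_le_iff₀ hr]; nlinarith
    rw [kap_of_le huM this]
    field_simp
  · rcases le_total ρ M with h' | h'
    · have hρ : 0 < ρ := by linarith
      rw [kap_of_mid h h']
      have e : ρ * ((u + (ρ - r) * ((M - u) / (M - r))) / ρ) = u + (ρ - r) * ((M - u) / (M - r)) := by
        field_simp
      have h3 : 0 ≤ (ρ - r) * ((M - u) / (M - r)) := mul_nonneg (by linarith) (by positivity)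
      have h4 : u + (ρ - r) * ((M - u) / (M - r)) ≤ M := by
        have : (ρ - r) * ((M - u) / (M - r)) ≤ M - u := by
          rw [mul_div_assoc', div_le_iff₀ h1]; nlinarith
        linarith
      refine ⟨by positivity, ?_⟩
      rw [e, kap_of_mid (by linarith) h4]
      have h5 : u + (ρ - r) * ((M - u) / (M - r)) ≠ 0 := by positivity
      have h6 : r + (u + (ρ - r) * ((M - u) / (M - r)) - u) * ((M - r) / (M - u)) = ρ := by
        field_simp; ring
      rw [h6]
      field_simp
    · rw [kap_of_ge hr hrM h', mul_one, mul_one, kap_of_ge hu huM h']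
      simp

theorem kap_bound {M r u ρ : ℝ} (hr : 0 < r) (hrM : r < M) (hu : 0 < u) (huM : u < M)
    (hρ : 0 ≤ ρ) : |ρ * kap M r u ρ - ρ| ≤ M := by
  have h1 : 0 < M - r := by linarith
  have h2 : 0 < M - u := by linarith
  rcases le_total ρ r with h | h
  · rw [kap_of_le hrM h]
    have : ρ * (u / r) ≤ u := by
      rw [mul_div_assoc', div_le_iff₀ hr]; nlinarith
    have h0 : 0 ≤ ρ * (u / r) := by positivity
    rw [abs_le]; constructor <;> linarith
  · rcases le_total ρ M with h' | h'
    · have hρ : 0 < ρ := by linarith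
      rw [kap_of_mid h h']
      have e : ρ * ((u + (ρ - r) * ((M - u) / (M - r))) / ρ) = u + (ρ - r) * ((M - u) / (M - r)) := by
        field_simp
      have h3 : 0 ≤ (ρ - r) * ((M - u) / (M - r)) := mul_nonneg (by linarith) (by positivity)
      have h4 : u + (ρ - r) * ((M - u) / (M - r)) ≤ M := by
        have : (ρ - r) * ((M - u) / (M - r)) ≤ M - u := by
          rw [mul_div_assoc', div_le_iff₀ h1]; nlinarith
        linarith
      rw [e, abs_le]; constructor <;> linarith
    · rw [kap_of_ge hr hrM h', mul_one, sub_self, abs_zero]; linarith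

theorem kap_zero (w : ℂ) : (kap 0 0 0 ‖w‖ : ℂ) * w = w := by
  by_cases hw : w = 0
  · simp [hw]
  · have : 0 < ‖w‖ := norm_pos_iff.2 hw
    have h : kap 0 0 0 ‖w‖ = 1 := by
      unfold kap
      rw [min_eq_right this.le, max_self, max_eq_left this.le]
      field_simp; simp
    rw [h]; simp

/-- radial stretch with sources `r`, targets `u` (both depending on `t`) -/
noncomputable def stretch (M : ℝ → ℝ) (r u : ℝ → ℝ → ℝ) (t : ℝ) (w : ℂ) (y : ℝ) : ℂ :=
  (kap (M y) (r t y) (u t y) ‖w‖ : ℂ) * w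

theorem stretch_inv (M : ℝ → ℝ) (r u : ℝ → ℝ → ℝ) (t : ℝ) (w : ℂ) (y : ℝ)
    (h : (0 < r t y ∧ r t y < M y ∧ 0 < u t y ∧ u t y < M y) ∨ (M y = 0 ∧ r t y = 0 ∧ u t y = 0)) :
    stretch M u r t (stretch M r u t w y) y = w := by
  rcases h with ⟨h1, h2, h3, h4⟩ | ⟨h1, h2, h3⟩
  · obtain ⟨p, q⟩ := kap_inv (ρ := ‖w‖) h1 h2 h3 h4
    unfold stretch
    have : ‖(kap (M y) (r t y) (u t y) ‖w‖ : ℂ) * w‖ = ‖w‖ * kap (M y) (r t y) (u t y) ‖w‖ := by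
      rw [norm_mul, Complex.norm_real, Real.norm_eq_abs, abs_of_pos p, mul_comm]
    rw [this, ← mul_assoc, ← Complex.ofReal_mul, q]; simp
  · unfold stretch
    rw [h1, h2, h3, kap_zero, kap_zero]

theorem stretch_cont (M : ℝ → ℝ) (r u : ℝ → ℝ → ℝ) (cM : Continuous M)
    (cr : Continuous fun p : ℝ × ℝ => r p.1 p.2) (cu : Continuous fun p : ℝ × ℝ => u p.1 p.2)
    (h1 : ∀ t ∈ Icc (0:ℝ) 1, ∀ y ∈ Ioo (-1:ℝ) 1,
      0 < r t y ∧ r t y < M y ∧ 0 < u t y ∧ u t y < M y)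
    (h2 : ∀ t ∈ Icc (0:ℝ) 1, ∀ y ∉ Ioo (-1:ℝ) 1, M y = 0 ∧ r t y = 0 ∧ u t y = 0) :
    ContinuousOn (fun p : ℝ × ℂ × ℝ => stretch M r u p.1 p.2.1 p.2.2) (Icc (0:ℝ) 1 ×ˢ univ) := by
  refine ext_continuous _ M cM ?_ ?_ ?_
  · intro y hy; exact (h2 0 (by simp) y hy).1
  · have c1 : Continuous fun p : ℝ × ℂ × ℝ => r p.1 p.2.2 := cr.comp (by fun_prop : Continuous fun p : ℝ × ℂ × ℝ => (p.1, p.2.2))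
    have c2 : Continuous fun p : ℝ × ℂ × ℝ => u p.1 p.2.2 := cu.comp (by fun_prop : Continuous fun p : ℝ × ℂ × ℝ => (p.1, p.2.2))
    have c3 : ContinuousOn (fun p : ℝ × ℂ × ℝ => kap (M p.2.2) (r p.1 p.2.2) (u p.1 p.2.2) ‖p.2.1‖)
        (Icc (0:ℝ) 1 ×ˢ univ ×ˢ Ioo (-1:ℝ) 1) := by
      unfold kap
      have d : ContinuousOn (fun p : ℝ × ℂ × ℝ => (M p.2.2 - u p.1 p.2.2) / (M p.2.2 - r p.1 p.2.2))
          (Icc (0:ℝ) 1 ×ˢ univ ×ˢ Ioo (-1:ℝ) 1) := by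
        refine ContinuousOn.div (Continuous.continuousOn (by fun_prop))
          (Continuous.continuousOn (by fun_prop)) ?_
        intro p hp
        have := h1 p.1 hp.1 p.2.2 hp.2.2
        have : 0 < M p.2.2 - r p.1 p.2.2 := by linarith
        exact this.ne'
      refine ContinuousOn.div ((ContinuousOn.add (Continuous.continuousOn (by fun_prop))
        (ContinuousOn.mul (Continuous.continuousOn (by fun_prop)) d)).add
        (Continuous.continuousOn (by fun_prop))) (Continuous.continuousOn (by fun_prop)) ?_
      intro p hp
      have := h1 p.1 hp.1 p.2.2 hp.2.2
      exact (lt_of_lt_of_le this.1 (le_max_right _ _)).ne'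
    unfold stretch
    exact (Complex.continuous_ofReal.comp_continuousOn c3).mul (by fun_prop)
  · intro t ht w y
    by_cases hy : y ∈ Ioo (-1:ℝ) 1
    · obtain ⟨a1, a2, a3, a4⟩ := h1 t ht y hy
      have hb := kap_bound a1 a2 a3 a4 (norm_nonneg w)
      have e : stretch M r u t w y - w = ((kap (M y) (r t y) (u t y) ‖w‖ - 1 : ℝ) : ℂ) * w := by
        unfold stretch; push_cast; ring
      rw [e, norm_mul, Complex.norm_real, Real.norm_eq_abs]
      calc _ = |(‖w‖ * kap (M y) (r t y) (u t y) ‖w‖ - ‖w‖)| := by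
            rw [show ‖w‖ * kap (M y) (r t y) (u t y) ‖w‖ - ‖w‖ =
              (kap (M y) (r t y) (u t y) ‖w‖ - 1) * ‖w‖ by ring, abs_mul, abs_norm]
        _ ≤ _ := hb
    · obtain ⟨a1, a2, a3⟩ := h2 t ht y hy
      unfold stretch
      rw [a1, a2, a3, kap_zero]; simp

theorem iso_stretch (r s : ℝ → ℝ) (cr : Continuous r) (cs : Continuous s)
    (r0 : ∀ y ∉ Ioo (-1:ℝ) 1, r y = 0) (rpos : ∀ y ∈ Ioo (-1:ℝ) 1, 0 < r y)
    (s0 : ∀ y ∉ Ioo (-1:ℝ) 1, s y = 0) (spos : ∀ y ∈ Ioo (-1:ℝ) 1, 0 < s y) :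
    AmbIso (Sheets (fun y => (r y : ℂ)) (fun y => -(r y : ℂ)))
      (Sheets (fun y => (s y : ℂ)) (fun y => -(s y : ℂ))) := by
  set M : ℝ → ℝ := fun y => r y + s y with hM
  set ρ : ℝ → ℝ → ℝ := fun _ y => r y with hρ
  set u : ℝ → ℝ → ℝ := fun t y => (1 - t) * r y + t * s y with hu
  have h1 : ∀ t ∈ Icc (0:ℝ) 1, ∀ y ∈ Ioo (-1:ℝ) 1,
      0 < ρ t y ∧ ρ t y < M y ∧ 0 < u t y ∧ u t y < M y := by
    intro t ht y hy
    have a := rpos y hy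
    have b := spos y hy
    simp only [hM, hρ, hu]
    refine ⟨a, by linarith, ?_, ?_⟩
    · rcases eq_or_lt_of_le ht.1 with h | h
      · rw [← h]; linarith
      · have := mul_pos h b
        have := mul_nonneg (sub_nonneg.2 ht.2) a.le
        linarith
    · rcases eq_or_lt_of_le ht.1 with h | h
      · rw [← h]; linarith
      · have := mul_pos h a
        have := mul_nonneg (sub_nonneg.2 ht.2) b.le
        linarith
  have h2 : ∀ t ∈ Icc (0:ℝ) 1, ∀ y ∉ Ioo (-1:ℝ) 1, M y = 0 ∧ ρ t y = 0 ∧ u t y = 0 := by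
    intro t _ y hy
    simp [hM, hρ, hu, r0 y hy, s0 y hy]
  have hor : ∀ t ∈ Icc (0:ℝ) 1, ∀ y,
      (0 < ρ t y ∧ ρ t y < M y ∧ 0 < u t y ∧ u t y < M y) ∨ (M y = 0 ∧ ρ t y = 0 ∧ u t y = 0) := by
    intro t ht y
    by_cases hy : y ∈ Ioo (-1:ℝ) 1
    · exact Or.inl (h1 t ht y hy)
    · exact Or.inr (h2 t ht y hy)
  have hmain : ∀ y, stretch M ρ u 1 (r y : ℂ) y = (s y : ℂ) := by
    intro y
    by_cases hy : y ∈ Ioo (-1:ℝ) 1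
    · obtain ⟨a1, a2, a3, a4⟩ := h1 1 (by simp) y hy
      unfold stretch
      have e : ‖(r y : ℂ)‖ = r y := by
        rw [Complex.norm_real, Real.norm_eq_abs, abs_of_pos (rpos y hy)]
      rw [e, kap_of_le a2 le_rfl, ← Complex.ofReal_mul]
      congr 1
      have : r y ≠ 0 := (rpos y hy).ne'
      simp only [hρ, hu]
      field_simp; ring
    · simp [stretch, r0 y hy, s0 y hy]
  refine sheets_iso (stretch M ρ u) (stretch M u ρ) _ _ _ _
    (stretch_cont M ρ u (by fun_prop) (by fun_prop) (by fun_prop) h1 h2)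
    (stretch_cont M u ρ (by fun_prop) (by fun_prop) (by fun_prop) ?_ ?_) ?_ ?_ ?_ ?_ ?_
  · intro t ht y hy
    obtain ⟨a1, a2, a3, a4⟩ := h1 t ht y hy
    exact ⟨a3, a4, a1, a2⟩
  · intro t ht y hy
    obtain ⟨a1, a2, a3⟩ := h2 t ht y hy
    exact ⟨a1, a3, a2⟩
  · intro w y
    have hu0 : u 0 y = ρ 0 y := by simp [hu, hρ]
    rcases hor 0 (by simp) y with ⟨a1, a2, a3, a4⟩ | ⟨a1, a2, a3⟩
    · unfold stretch
      rw [hu0]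
      have hk : kap (M y) (ρ 0 y) (ρ 0 y) ‖w‖ = 1 := by
        rcases le_total ‖w‖ (ρ 0 y) with h | h
        · rw [kap_of_le a2 h, div_self a1.ne']
        · rcases le_total ‖w‖ (M y) with h' | h'
          · have : M y - ρ 0 y ≠ 0 := by linarith
            have hw : ‖w‖ ≠ 0 := by linarith
            rw [kap_of_mid h h', div_self this]
            field_simp; ring
          · exact kap_of_ge a1 a2 h'
      rw [hk]; simp
    · unfold stretch
      rw [a1, a2, a3, kap_zero]
  · intro t ht w y
    exact stretch_inv M ρ u t w y (hor t ht y)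
  · intro t ht w y
    refine stretch_inv M u ρ t w y ?_
    rcases hor t ht y with ⟨a1, a2, a3, a4⟩ | ⟨a1, a2, a3⟩
    · exact Or.inl ⟨a3, a4, a1, a2⟩
    · exact Or.inr ⟨a1, a3, a2⟩
  · intro y _; exact hmain y
  · intro y _
    have : stretch M ρ u 1 (-(r y : ℂ)) y = - stretch M ρ u 1 (r y : ℂ) y := by
      simp [stretch]
    rw [this, hmain]

theorem iso_sheets_circle (a b : ℝ → ℂ) (ca : Continuous a) (cb : Continuous b)
    (h0 : ∀ y ∉ Ioo (-1:ℝ) 1, a y = b y) (h1 : ∀ y ∈ Ioo (-1:ℝ) 1, a y ≠ b y) :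
    AmbIso (Sheets a b) (Sheets (fun y => (Real.sqrt (1 - y^2) : ℂ))
      (fun y => -(Real.sqrt (1 - y^2) : ℂ))) := by
  refine (iso_translate a b ca cb).trans ?_
  set c : ℝ → ℂ := fun y => (a y - b y)/2 with hc
  have cc : Continuous c := by fun_prop
  have c0 : ∀ y ∉ Ioo (-1:ℝ) 1, c y = 0 := fun y hy => by simp [hc, h0 y hy]
  have cne : ∀ y ∈ Ioo (-1:ℝ) 1, c y ≠ 0 := fun y hy => by
    simp only [hc]
    exact div_ne_zero (sub_ne_zero.2 (h1 y hy)) two_ne_zero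
  refine (iso_twist c cc c0 cne).trans ?_
  refine iso_stretch (fun y => ‖c y‖) (fun y => Real.sqrt (1 - y^2)) cc.norm (by fun_prop) ?_ ?_ ?_ ?_
  · intro y hy; simp [c0 y hy]
  · intro y hy; exact norm_pos_iff.2 (cne y hy)
  · intro y hy
    apply Real.sqrt_eq_zero_of_nonpos
    by_contra hcon
    push Not at hcon
    exact hy ⟨by nlinarith, by nlinarith⟩
  · intro y hy
    apply Real.sqrt_pos.2
    nlinarith [hy.1, hy.2]



theorem iso_shear (L : ℂ → ℝ) (cL : Continuous L) (q : ℝ) (hq : 0 < q) (A : Set (ℂ × ℝ)) :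
    AmbIso A ((fun p : ℂ × ℝ => (p.1, L p.1 + q * p.2)) '' A) := by
  have hpos : ∀ t ∈ Icc (0:ℝ) 1, 0 < (1 - t) + t * q := by
    intro t ht
    rcases eq_or_lt_of_le ht.1 with h | h
    · rw [← h]; norm_num
    · have := mul_pos h hq
      linarith [ht.2]
  refine AmbIso.of_inverse
    (fun p => (p.2.1, (1 - p.1) * p.2.2 + p.1 * (L p.2.1 + q * p.2.2)))
    (fun p => (p.2.1, (p.2.2 - p.1 * L p.2.1) / ((1 - p.1) + p.1 * q))) ?_ ?_ ?_ ?_ ?_ ?_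
  · fun_prop
  · refine ContinuousOn.prodMk (by fun_prop) (ContinuousOn.div (by fun_prop) (by fun_prop) ?_)
    rintro ⟨t, x⟩ ⟨ht, -⟩
    exact (hpos t ht).ne'
  · rintro ⟨w, y⟩; simp
  · rintro t ht ⟨w, y⟩
    have := (hpos t ht).ne'
    simp only [Prod.mk.injEq, true_and]
    rw [div_eq_iff this]; ring
  · rintro t ht ⟨w, y⟩
    have := (hpos t ht).ne'
    simp only [Prod.mk.injEq, true_and]
    field_simp; ring
  · simp

theorem arc_graph (φ : ℝ → ℝ) (W : ℝ → ℂ) (c d : ℝ) (cφ : Continuous φ)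
    (inj : InjOn φ (Icc c d)) (im : φ '' Icc c d = Icc (-1) 1) (cW : Continuous W) :
    ∃ a : ℝ → ℂ, Continuous a ∧ (∀ t ∈ Icc c d, a (φ t) = W t) ∧ (∀ y, 1 ≤ y → a y = a 1) ∧
      ∀ y, y ≤ -1 → a y = a (-1) := by
  have bij : BijOn φ (Icc c d) (Icc (-1) 1) := by
    rw [← im]; exact inj.bijOn_image
  let E : Icc c d ≃ Icc (-1:ℝ) 1 := bij.equiv φ
  have cE : Continuous E := (cφ.continuousOn (s := Icc c d)).mapsToRestrict bij.mapsTo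
  let e : Icc c d ≃ₜ Icc (-1:ℝ) 1 := Continuous.homeoOfEquivCompactToT2 cE
  have hl : (-1:ℝ) ≤ 1 := by norm_num
  refine ⟨fun y => W (e.symm (projIcc (-1) 1 hl y)), ?_, ?_, ?_, ?_⟩
  · exact cW.comp (continuous_subtype_val.comp (e.symm.continuous.comp continuous_projIcc))
  · intro t ht
    have h1 : projIcc (-1) 1 hl (φ t) = e ⟨t, ht⟩ := by
      rw [projIcc_of_mem hl (bij.mapsTo ht)]; rfl
    simp only [h1, e.symm_apply_apply]
  · intro y hy
    simp only [projIcc_of_right_le hl hy, projIcc_right]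
  · intro y hy
    simp only [projIcc_of_le_left hl hy, projIcc_left]

theorem sheets_of_arcs (φ : ℝ → ℝ) (W : ℝ → ℂ) (s p r σ : ℝ) (hσ : σ = 1 ∨ σ = -1)
    (hsp : s < p) (hpr : p < r)
    (cφ : Continuous φ) (cW : Continuous W)
    (inj1 : InjOn φ (Icc s p)) (inj2 : InjOn φ (Icc p r))
    (im1 : φ '' Icc s p = Icc (-1) 1) (im2 : φ '' Icc p r = Icc (-1) 1)
    (φs : φ s = -σ) (φp : φ p = σ) (φr : φ r = -σ) (Wr : W r = W s)
    (hne : ∀ t ∈ Icc s p, ∀ t' ∈ Icc p r, φ t = φ t' → W t = W t' → φ t ∉ Ioo (-1:ℝ) 1) :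
    AmbIso ((fun t => (W t, φ t)) '' Icc s r)
      (Sheets (fun y => (√(1-y^2):ℂ)) (fun y => -(√(1-y^2):ℂ))) := by
  obtain ⟨a, ca, ha, ha1, ha2⟩ := arc_graph φ W s p cφ inj1 im1 cW
  obtain ⟨b, cb, hb, hb1, hb2⟩ := arc_graph φ W p r cφ inj2 im2 cW
  have e1 : a (-σ) = b (-σ) := by
    rw [← φs, ha s ⟨le_rfl, hsp.le⟩, φs, ← φr, hb r ⟨hpr.le, le_rfl⟩, Wr]
  have e2 : a σ = b σ := by
    rw [← φp, ha p ⟨hsp.le, le_rfl⟩, hb p ⟨le_rfl, hpr.le⟩]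
  have e3 : a 1 = b 1 ∧ a (-1) = b (-1) := by
    rcases hσ with rfl | rfl
    · exact ⟨e2, e1⟩
    · rw [neg_neg] at e1; exact ⟨e1, e2⟩
  have hS : (fun t => (W t, φ t)) '' Icc s r = Sheets a b := by
    ext ⟨w, y⟩
    constructor
    · rintro ⟨t, ht, h⟩
      simp only [Prod.mk.injEq] at h
      obtain ⟨rfl, rfl⟩ := h
      rcases le_total t p with h | h
      · have ht' : t ∈ Icc s p := ⟨ht.1, h⟩
        refine ⟨?_, Or.inl (ha t ht').symm⟩
        rw [← im1]; exact mem_image_of_mem _ ht'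
      · have ht' : t ∈ Icc p r := ⟨h, ht.2⟩
        refine ⟨?_, Or.inr (hb t ht').symm⟩
        rw [← im2]; exact mem_image_of_mem _ ht'
    · rintro ⟨hy, h | h⟩
      · simp only at hy h
        rw [← im1] at hy
        obtain ⟨t, ht, rfl⟩ := hy
        exact ⟨t, ⟨ht.1, ht.2.trans hpr.le⟩, by simp [h, ha t ht]⟩
      · simp only at hy h
        rw [← im2] at hy
        obtain ⟨t, ht, rfl⟩ := hy
        exact ⟨t, ⟨hsp.le.trans ht.1, ht.2⟩, by simp [h, hb t ht]⟩
  rw [hS]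
  refine iso_sheets_circle a b ca cb ?_ ?_
  · intro y hy
    rcases le_or_gt 1 y with h | h
    · rw [ha1 y h, hb1 y h, e3.1]
    · have h' : y ≤ -1 := by
        by_contra h2; exact hy ⟨not_le.1 h2, h⟩
      rw [ha2 y h', hb2 y h', e3.2]
  · intro y hy hab
    have hy1 : y ∈ φ '' Icc s p := by rw [im1]; exact Ioo_subset_Icc_self hy
    have hy2 : y ∈ φ '' Icc p r := by rw [im2]; exact Ioo_subset_Icc_self hy
    obtain ⟨t, ht, rfl⟩ := hy1
    obtain ⟨t', ht', he⟩ := hy2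
    refine hne t ht t' ht' he.symm ?_ hy
    rw [← ha t ht, ← hb t' ht', he, hab]

/-- Identification of Euclidean space with the product of a plane and a line. -/
def splitHomeo : EuclideanSpace ℝ (Fin 3) ≃ₜ ℂ × ℝ where
  toFun v := ((v 0 : ℂ) + (v 2 : ℂ) * Complex.I, v 1)
  invFun p := !₂[p.1.re, p.2, p.1.im]
  left_inv v := by
    ext i; fin_cases i <;> simp
  right_inv p := by
    ext <;> simp
  continuous_toFun := by fun_prop
  continuous_invFun := by
    apply (PiLp.continuous_toLp 2 _).comp
    rw [continuous_pi_iff]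
    intro i
    fin_cases i
    · exact Complex.continuous_re.comp continuous_fst
    · exact continuous_snd
    · exact Complex.continuous_im.comp continuous_fst

theorem splitHomeo_circle :
    splitHomeo '' {p : EuclideanSpace ℝ (Fin 3) | p 0 ^ 2 + p 1 ^ 2 = 1 ∧ p 2 = 0} =
      Sheets (fun y => (√(1-y^2):ℂ)) (fun y => -(√(1-y^2):ℂ)) := by
  ext ⟨w, y⟩
  constructor
  · rintro ⟨v, ⟨h1, h2⟩, h⟩
    have h' : ((v 0 : ℂ) + (v 2 : ℂ) * Complex.I, v 1) = (w, y) := h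
    simp only [Prod.mk.injEq, h2] at h'
    obtain ⟨rfl, rfl⟩ := h'
    have e : 1 - v 1 ^ 2 = v 0 ^ 2 := by linarith
    refine ⟨⟨by nlinarith [sq_nonneg (v 0)], by nlinarith [sq_nonneg (v 0)]⟩, ?_⟩
    simp only [e, Real.sqrt_sq_eq_abs]
    rcases abs_choice (v 0) with h | h
    · left; rw [h]; simp
    · right; rw [h]; simp
  · rintro ⟨hy, h⟩
    simp only at hy h
    have hq : 0 ≤ 1 - y ^ 2 := by nlinarith [hy.1, hy.2]
    rcases h with h | h
    · refine ⟨!₂[√(1-y^2), y, 0], ?_, ?_⟩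
      · simp [Real.sq_sqrt hq]
      · simp [splitHomeo, h]
    · refine ⟨!₂[-√(1-y^2), y, 0], ?_, ?_⟩
      · simp [Real.sq_sqrt hq]
      · simp [splitHomeo, h]

theorem unknotted_of_unimodal (K : AddCircle (1 : ℝ) → EuclideanSpace ℝ (Fin 3))
    (hK : Continuous K) (hinj : Function.Injective K) (x : EuclideanSpace ℝ (Fin 3))
    (hx : x 1 ≠ 0) (s p : ℝ) (hsp : s < p) (hps : p < s + 1)
    (hm : StrictMonoOn (fun t : ℝ => ⟪K (t : AddCircle (1:ℝ)), x⟫) (Icc s p))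
    (ha : StrictAntiOn (fun t : ℝ => ⟪K (t : AddCircle (1:ℝ)), x⟫) (Icc p (s + 1))) :
    Unknotted K := by
  set h : ℝ → ℝ := fun t : ℝ => ⟪K (t : AddCircle (1:ℝ)), x⟫ with hh
  have cK : Continuous fun t : ℝ => K (t : AddCircle (1:ℝ)) :=
    hK.comp (AddCircle.continuous_mk' 1)
  have ch : Continuous h := cK.inner continuous_const
  have hform : ∀ t : ℝ, h t = x 0 * K (t : AddCircle (1:ℝ)) 0 + x 1 * K (t : AddCircle (1:ℝ)) 1 + x 2 * K (t : AddCircle (1:ℝ)) 2 := by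
    intro t
    simp [hh, PiLp.inner_apply, Fin.sum_univ_three]
  have per : ((s + 1 : ℝ) : AddCircle (1:ℝ)) = (s : AddCircle (1:ℝ)) := by
    rw [AddCircle.coe_add, AddCircle.coe_period, add_zero]
  have hr : h (s + 1) = h s := by simp only [hh, per]
  set α := h s with hα
  set β := h p with hβ
  have hαβ : α < β := hm ⟨le_rfl, hsp.le⟩ ⟨hsp.le, le_rfl⟩ hsp
  obtain ⟨σ, hσ, hσx⟩ : ∃ σ : ℝ, (σ = 1 ∨ σ = -1) ∧ 0 < σ * x 1 := by
    rcases lt_or_gt_of_ne hx with h | h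
    · exact ⟨-1, Or.inr rfl, by linarith⟩
    · exact ⟨1, Or.inl rfl, by linarith⟩
  have hσ2 : σ * σ = 1 := by rcases hσ with rfl | rfl <;> norm_num
  have hσ0 : σ ≠ 0 := by rcases hσ with rfl | rfl <;> norm_num
  have hd : 0 < β - α := by linarith
  set f : ℝ → ℝ := fun z => σ * (2 * z - (α + β)) / (β - α) with hf
  have cf : Continuous f := by fun_prop
  have injf : Function.Injective f := by
    intro z z' hz
    simp only [hf] at hz
    rw [div_left_inj' hd.ne', mul_right_inj' hσ0] at hz
    linarith
  have fα : f α = -σ := by simp only [hf]; field_simp; ring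
  have fβ : f β = σ := by simp only [hf]; field_simp; ring
  have imf : f '' Icc α β = Icc (-1) 1 := by
    ext y
    constructor
    · rintro ⟨z, hz, rfl⟩
      have h1 : -1 ≤ (2 * z - (α + β)) / (β - α) := by
        rw [le_div_iff₀ hd]; linarith [hz.1]
      have h2 : (2 * z - (α + β)) / (β - α) ≤ 1 := by
        rw [div_le_iff₀ hd]; linarith [hz.2]
      simp only [hf, mul_div_assoc]
      rcases hσ with rfl | rfl
      · exact ⟨by linarith, by linarith⟩
      · exact ⟨by linarith, by linarith⟩
    · intro hy
      refine ⟨(σ * y * (β - α) + (α + β)) / 2, ?_, ?_⟩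
      · rcases hσ with rfl | rfl
        · exact ⟨by nlinarith [hy.1, hy.2], by nlinarith [hy.1, hy.2]⟩
        · exact ⟨by nlinarith [hy.1, hy.2], by nlinarith [hy.1, hy.2]⟩
      · simp only [hf]
        rw [div_eq_iff hd.ne']
        linear_combination (y * (β - α)) * hσ2
  set φ : ℝ → ℝ := fun t => f (h t) with hφ
  have cφ : Continuous φ := cf.comp ch
  set W : ℝ → ℂ := fun t => (K (t : AddCircle (1:ℝ)) 0 : ℂ) + (K (t : AddCircle (1:ℝ)) 2 : ℂ) * Complex.I with hW
  have cW : Continuous W := by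
    have h0 : Continuous fun t : ℝ => K (t : AddCircle (1:ℝ)) 0 :=
      (continuous_apply 0).comp ((PiLp.continuous_ofLp 2 _).comp cK)
    have h2 : Continuous fun t : ℝ => K (t : AddCircle (1:ℝ)) 2 :=
      (continuous_apply 2).comp ((PiLp.continuous_ofLp 2 _).comp cK)
    exact (Complex.continuous_ofReal.comp h0).add
      ((Complex.continuous_ofReal.comp h2).mul continuous_const)
  have im1 : h '' Icc s p = Icc α β := by
    apply Subset.antisymm
    · rintro _ ⟨t, ht, rfl⟩
      exact ⟨hm.monotoneOn ⟨le_rfl, hsp.le⟩ ht ht.1, hm.monotoneOn ht ⟨hsp.le, le_rfl⟩ ht.2⟩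
    · exact intermediate_value_Icc hsp.le ch.continuousOn
  have im2 : h '' Icc p (s + 1) = Icc α β := by
    apply Subset.antisymm
    · rintro _ ⟨t, ht, rfl⟩
      refine ⟨?_, ha.antitoneOn ⟨le_rfl, hps.le⟩ ht ht.1⟩
      rw [← hr]; exact ha.antitoneOn ht ⟨hps.le, le_rfl⟩ ht.2
    · have := intermediate_value_Icc' hps.le (ch.continuousOn (s := Icc p (s + 1)))
      rwa [hr] at this
  have main := sheets_of_arcs φ W s p (s + 1) σ hσ hsp hps cφ cW
    (injf.comp_injOn hm.injOn) (injf.comp_injOn ha.injOn)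
    (by rw [hφ, ← image_image f h, im1, imf]) (by rw [hφ, ← image_image f h, im2, imf])
    fα fβ (by simp only [hφ, hr, fα]) (by simp only [hW, per]) (by
      intro t ht t' ht' e1 e2
      have e3 : h t = h t' := injf e1
      have e4 : K (t : AddCircle (1:ℝ)) 0 = K (t' : AddCircle (1:ℝ)) 0 := by
        simpa [hW] using congrArg Complex.re e2
      have e5 : K (t : AddCircle (1:ℝ)) 2 = K (t' : AddCircle (1:ℝ)) 2 := by
        simpa [hW] using congrArg Complex.im e2
      have e6 : K (t : AddCircle (1:ℝ)) 1 = K (t' : AddCircle (1:ℝ)) 1 := by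
        rw [hform, hform, e4, e5] at e3
        apply mul_left_cancel₀ hx
        linarith
      have e7 : (t : AddCircle (1:ℝ)) = (t' : AddCircle (1:ℝ)) := by
        apply hinj
        ext i; fin_cases i
        · exact e4
        · exact e6
        · exact e5
      have e8 : t = p ∨ t = s := by
        by_contra hc
        push Not at hc
        have h1 : t < p := lt_of_le_of_ne ht.2 hc.1
        have h2 : s < t := lt_of_le_of_ne ht.1 (Ne.symm hc.2)
        refine coe_ne_of_abs_lt ?_ ?_ e7
        · have := ht'.1
          intro h3; linarith
        · rw [abs_lt]; constructor <;> linarith [ht'.1, ht'.2]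
      have e9 : φ t = σ ∨ φ t = -σ := by
        rcases e8 with rfl | rfl
        · left; exact fβ
        · right; exact fα
      rintro ⟨g1, g2⟩
      rcases hσ with rfl | rfl <;> rcases e9 with e | e <;> rw [e] at g1 g2 <;> linarith)
  set L : ℂ → ℝ := fun w => σ * (2 * (x 0 * w.re + x 2 * w.im) - (α + β)) / (β - α) with hL
  have cL : Continuous L := by
    have := Complex.continuous_re
    have := Complex.continuous_im
    fun_prop
  have hq : 0 < 2 * (σ * x 1) / (β - α) := by positivity
  have sh := iso_shear L cL _ hq (splitHomeo '' range K)
  have hset : (fun q : ℂ × ℝ => (q.1, L q.1 + 2 * (σ * x 1) / (β - α) * q.2)) ''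
      (splitHomeo '' range K) = (fun t => (W t, φ t)) '' Icc s (s + 1) := by
    have pt : ∀ t : ℝ, (fun q : ℂ × ℝ => (q.1, L q.1 + 2 * (σ * x 1) / (β - α) * q.2))
        (splitHomeo (K (t : AddCircle (1:ℝ)))) = (W t, φ t) := by
      intro t
      have h1 : splitHomeo (K (t : AddCircle (1:ℝ))) = (W t, K (t : AddCircle (1:ℝ)) 1) := rfl
      rw [h1]
      simp only [Prod.mk.injEq, true_and, hL, hφ, hf, hform t]
      have h2 : (W t).re = K (t : AddCircle (1:ℝ)) 0 := by simp [hW]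
      have h3 : (W t).im = K (t : AddCircle (1:ℝ)) 2 := by simp [hW]
      rw [h2, h3]
      field_simp
      ring
    rw [image_image, ← range_comp]
    apply Subset.antisymm
    · rintro _ ⟨θ, rfl⟩
      have : θ ∈ ((↑) : ℝ → AddCircle (1:ℝ)) '' Icc s (s + 1) := by
        rw [AddCircle.coe_image_Icc_eq]; exact mem_univ _
      obtain ⟨t, ht, rfl⟩ := this
      exact ⟨t, ht, (pt t).symm⟩
    · rintro _ ⟨t, ht, rfl⟩
      exact ⟨(t : AddCircle (1:ℝ)), pt t⟩
  rw [hset] at sh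
  have fin := sh.trans main
  rw [← splitHomeo_circle] at fin
  exact AmbIso.transfer splitHomeo fin

/-- Fáry/Milnor theorem: a knotted closed curve in `ℝ³` has total
curvature at least `4π`. -/
theorem fary_milnor (K : AddCircle (1 : ℝ) → EuclideanSpace ℝ (Fin 3))
    (hK : Continuous K) (hinj : Function.Injective K) (hknot : ¬ Unknotted K) :
    ENNReal.ofReal (4 * Real.pi) ≤ loopTC K := by
  by_contra hc
  push Not at hc
  have hfin : loopTC K ≠ ⊤ := (hc.trans ENNReal.ofReal_lt_top).ne
  have hT : (loopTC K).toReal < 4 * Real.pi := by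
    have := (ENNReal.toReal_lt_toReal hfin ENNReal.ofReal_ne_top).2 hc
    rwa [ENNReal.toReal_ofReal (by positivity)] at this
  obtain ⟨x, hx, s, p, hsp, hps, hm, ha⟩ := exists_unimodal_direction K hK hinj _ hT (by
    intro m u hu
    have h1 : ENNReal.ofReal (loopPolyTC K m u) ≤ loopTC K :=
      le_iSup_of_le m (le_iSup_of_le u (le_iSup_of_le hu le_rfl))
    exact (ENNReal.ofReal_le_iff_le_toReal hfin).1 h1)
  exact hknot (unknotted_of_unimodal K hK hinj x hx s p hsp hps hm ha)
end

section
/- (Cauchy/Crofton formula) Let γ : [0,1] → ℝ² be a continuous curve. Then Len(γ) = (π/2) ∫_{S¹} Len(⟨γ(·), v⟩) dσ(v), as an identity in [0,∞], where σ is the uniform (rotation-invariant) probability measure on the unit circle S¹ and Len(⟨γ(·), v⟩) is the length (total variation) of the real-valued curve t ↦ ⟨γ(t), v⟩. In words: the length of a plane curve equals π/2 times the average length of its orthogonal projections to lines. -/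
open Set Filter MeasureTheory
open scoped ENNReal NNReal RealInnerProductSpace

theorem cc_sum_comp_le {E : Type*} [NormedAddCommGroup E] (g : ℕ → E) (k : ℕ → ℕ) (m : ℕ)
    (hk : ∀ i < m, k i ≤ k (i + 1)) :
    ∑ i ∈ Finset.range m, ‖g (k (i + 1)) - g (k i)‖
      ≤ ∑ j ∈ Finset.range (k m), ‖g (j + 1) - g j‖ := by
  induction m with
  | zero => simpa using Finset.sum_nonneg fun i _ => norm_nonneg _
  | succ m ih =>
    have h1 := ih fun i hi => hk i (by omega)
    have h2 := hk m (by omega)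
    rw [Finset.sum_range_succ, ← Finset.sum_range_add_sum_Ico _ h2]
    refine add_le_add h1 ?_
    have := dist_le_Ico_sum_dist g h2
    simpa [dist_eq_norm, norm_sub_rev] using this

/-- Dyadic parameters. -/
noncomputable def ccDy (n : ℕ) (i : ℕ) : ℝ := (i : ℝ) / 2 ^ n

theorem cc_dyadic_mono {E : Type*} [NormedAddCommGroup E] (f : ℝ → E) :
    Monotone fun n => polyLen f (2 ^ n) (ccDy n) := by
  refine monotone_nat_of_le_succ fun n => ?_
  have := cc_sum_comp_le (fun j => f (ccDy (n + 1) j)) (fun i => 2 * i) (2 ^ n)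
    (fun i _ => by omega)
  have e : ∀ i, ccDy (n + 1) (2 * i) = ccDy n i := fun i => by
    simp only [ccDy, pow_succ]; push_cast; field_simp
  simp only [e] at this
  unfold polyLen
  rwa [← pow_succ'] at this

theorem cc_arcLen_eq {E : Type*} [NormedAddCommGroup E] (f : ℝ → E)
    (hf : ContinuousOn f (Icc 0 1)) :
    arcLen f 0 1 = ⨆ n, ENNReal.ofReal (polyLen f (2 ^ n) (ccDy n)) := by
  apply le_antisymm
  · refine iSup_le fun m => iSup_le fun u => iSup_le fun hu => ?_
    obtain ⟨hu1, hu2⟩ := hu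
    have hfl : ∀ i ≤ m, Tendsto (fun n : ℕ => ccDy n ⌊u i * 2 ^ n⌋₊) atTop
        (nhdsWithin (u i) (Icc 0 1)) := by
      intro i hi
      have h0 := (hu2 i hi).1
      have h1 := (hu2 i hi).2
      refine tendsto_nhdsWithin_iff.2 ⟨?_, ?_⟩
      · have := (tendsto_nat_floor_mul_div_atTop h0).comp
          (tendsto_pow_atTop_atTop_of_one_lt (one_lt_two : (1 : ℝ) < 2))
        exact this
      · refine Eventually.of_forall fun n => ⟨by unfold ccDy; positivity, ?_⟩
        unfold ccDy
        rw [div_le_one (by positivity)]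
        refine (Nat.floor_le (by positivity)).trans ?_
        have : (0 : ℝ) < 2 ^ n := by positivity
        nlinarith
    have hlim : Tendsto (fun n : ℕ => polyLen f m fun i => ccDy n ⌊u i * 2 ^ n⌋₊) atTop
        (nhds (polyLen f m u)) := by
      unfold polyLen
      refine tendsto_finsetSum _ fun i hi => ?_
      have hi := Finset.mem_range.1 hi
      have a := (hf (u i) (hu2 i hi.le)).tendsto.comp (hfl i hi.le)
      have b := (hf (u (i + 1)) (hu2 (i + 1) hi)).tendsto.comp (hfl (i + 1) hi)
      exact (b.sub a).norm
    refine le_of_tendsto' ((ENNReal.continuous_ofReal.tendsto _).comp hlim) fun n => ?_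
    refine le_trans ?_ (le_iSup _ n)
    refine ENNReal.ofReal_le_ofReal ?_
    refine (cc_sum_comp_le (fun j => f (ccDy n j)) (fun i => ⌊u i * 2 ^ n⌋₊) m ?_).trans ?_
    · intro i hi
      exact Nat.floor_le_floor (mul_le_mul_of_nonneg_right (hu1 i hi).le (by positivity))
    · unfold polyLen
      refine Finset.sum_le_sum_of_subset_of_nonneg ?_ fun _ _ _ => norm_nonneg _
      refine Finset.range_subset_range.2 ?_
      refine Nat.floor_le_of_le ?_
      push_cast
      have : (0 : ℝ) < 2 ^ n := by positivity
      have h1 := (hu2 m le_rfl).2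
      nlinarith
  · refine iSup_le fun n => ?_
    refine le_iSup_of_le (2 ^ n) (le_iSup_of_le (ccDy n) (le_iSup_of_le ⟨?_, ?_⟩ le_rfl))
    · intro i _
      unfold ccDy
      gcongr
      omega
    · intro i hi
      refine ⟨by unfold ccDy; positivity, ?_⟩
      unfold ccDy
      rw [div_le_one (by positivity)]
      exact_mod_cast hi

theorem cc_int_abs_cos (φ : ℝ) :
    ∫⁻ θ in Ioc 0 Real.pi, ENNReal.ofReal |Real.cos (θ - φ)| = ENNReal.ofReal 2 := by
  have hc : Continuous fun θ : ℝ => |Real.cos (θ - φ)| := by fun_prop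
  rw [← ofReal_integral_eq_lintegral_ofReal
    ((hc.integrableOn_Icc (a := 0) (b := Real.pi)).mono_set Ioc_subset_Icc_self)
    (Eventually.of_forall fun _ => abs_nonneg _)]
  congr 1
  rw [← intervalIntegral.integral_of_le Real.pi_pos.le]
  rw [intervalIntegral.integral_comp_sub_right (fun x => |Real.cos x|)]
  have hp : Function.Periodic (fun x => |Real.cos x|) Real.pi := fun x => by
    simp [Real.cos_add_pi]
  have := hp.intervalIntegral_add_eq (0 - φ) (-(Real.pi / 2))
  rw [show (0 - φ + Real.pi) = Real.pi - φ by ring,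
    show (-(Real.pi / 2) + Real.pi) = Real.pi / 2 by ring] at this
  rw [this]
  rw [intervalIntegral.integral_congr (g := Real.cos)]
  · simp; norm_num
  · intro x hx
    rw [uIcc_of_le (by linarith [Real.pi_pos])] at hx
    exact abs_of_nonneg (Real.cos_nonneg_of_mem_Icc hx)

theorem cc_exists_angle (v : EuclideanSpace ℝ (Fin 2)) (hv : ‖v‖ = 1) :
    ∃ φ, v 0 = Real.cos φ ∧ v 1 = Real.sin φ := by
  have h : v 0 ^ 2 + v 1 ^ 2 = 1 := by
    have := EuclideanSpace.real_norm_sq_eq v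
    rw [hv, Fin.sum_univ_two] at this
    linarith
  have hz : ‖(⟨v 0, v 1⟩ : ℂ)‖ = 1 := by
    rw [Complex.norm_def, Complex.normSq_mk, Real.sqrt_eq_one]; linarith
  refine ⟨Complex.arg ⟨v 0, v 1⟩, ?_, ?_⟩
  · rw [Complex.cos_arg (by rw [← norm_ne_zero_iff, hz]; simp), hz]; simp
  · rw [Complex.sin_arg, hz]; simp

/-- The unit vector at angle θ. -/
noncomputable def ccE (θ : ℝ) : EuclideanSpace ℝ (Fin 2) := !₂[Real.cos θ, Real.sin θ]

theorem ccE_norm (θ : ℝ) : ‖ccE θ‖ = 1 := by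
  simp [ccE, EuclideanSpace.norm_eq, Fin.sum_univ_two]

theorem ccE_cont : Continuous ccE := by
  unfold ccE
  refine (PiLp.continuous_toLp 2 _).comp ?_
  refine continuous_pi fun i => ?_
  fin_cases i
  · exact Real.continuous_cos
  · exact Real.continuous_sin

section
variable (σ : Measure (EuclideanSpace ℝ (Fin 2))) [IsProbabilityMeasure σ]

theorem cc_inv
    (hinv : ∀ g : EuclideanSpace ℝ (Fin 2) ≃ₗᵢ[ℝ] EuclideanSpace ℝ (Fin 2), σ.map g = σ)
    (x y : EuclideanSpace ℝ (Fin 2)) (h : ‖x‖ = ‖y‖) :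
    ∫⁻ v, ENNReal.ofReal |⟪x, v⟫| ∂σ = ∫⁻ v, ENNReal.ofReal |⟪y, v⟫| ∂σ := by
  obtain ⟨g, hg⟩ : ∃ g : EuclideanSpace ℝ (Fin 2) ≃ₗᵢ[ℝ] EuclideanSpace ℝ (Fin 2), g x = y :=
    ⟨_, Submodule.reflection_sub h⟩
  conv_rhs => rw [← hinv g]
  rw [lintegral_map (by fun_prop) g.continuous.measurable]
  simp [← hg]

theorem cc_const
    (hsupp : σ (Metric.sphere (0 : EuclideanSpace ℝ (Fin 2)) 1)ᶜ = 0)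
    (hinv : ∀ g : EuclideanSpace ℝ (Fin 2) ≃ₗᵢ[ℝ] EuclideanSpace ℝ (Fin 2), σ.map g = σ) :
    ENNReal.ofReal (Real.pi / 2) * ∫⁻ v, ENNReal.ofReal |⟪ccE 0, v⟫| ∂σ = 1 := by
  have hae : ∀ᵐ v ∂σ, v ∈ Metric.sphere (0 : EuclideanSpace ℝ (Fin 2)) 1 := hsupp
  have hce := ccE_cont
  have key : ∫⁻ θ in Ioc 0 Real.pi, ∫⁻ v, ENNReal.ofReal |⟪ccE θ, v⟫| ∂σ
      = ENNReal.ofReal 2 := by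
    rw [lintegral_lintegral_swap]
    · rw [lintegral_congr_ae (g := fun _ => ENNReal.ofReal 2)]
      · simp
      · filter_upwards [hae] with v hv
        obtain ⟨φ, h0, h1⟩ := cc_exists_angle v (by simpa using hv)
        rw [← cc_int_abs_cos φ]
        congr 1
        ext θ
        simp [ccE, PiLp.inner_apply, Fin.sum_univ_two, h0, h1, Real.cos_sub, mul_comm]
    · refine Continuous.aemeasurable ?_
      simp only [Function.uncurry_def]
      exact ENNReal.continuous_ofReal.comp
        ((hce.comp continuous_fst).inner continuous_snd).abs
  simp_rw [fun θ => cc_inv σ hinv (ccE θ) (ccE 0) (by rw [ccE_norm, ccE_norm])] at key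
  rw [setLIntegral_const, Real.volume_Ioc, sub_zero] at key
  rw [show Real.pi / 2 = 2⁻¹ * Real.pi by ring, ENNReal.ofReal_mul (by norm_num), mul_assoc,
    mul_comm (ENNReal.ofReal Real.pi), key, ← ENNReal.ofReal_mul (by norm_num)]
  norm_num

theorem cc_vec
    (hsupp : σ (Metric.sphere (0 : EuclideanSpace ℝ (Fin 2)) 1)ᶜ = 0)
    (hinv : ∀ g : EuclideanSpace ℝ (Fin 2) ≃ₗᵢ[ℝ] EuclideanSpace ℝ (Fin 2), σ.map g = σ)
    (x : EuclideanSpace ℝ (Fin 2)) :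
    ENNReal.ofReal (Real.pi / 2) * ∫⁻ v, ENNReal.ofReal |⟪x, v⟫| ∂σ = ENNReal.ofReal ‖x‖ := by
  rw [cc_inv σ hinv x (‖x‖ • ccE 0) (by simp [norm_smul, ccE_norm])]
  simp_rw [real_inner_smul_left, abs_mul, abs_norm, ENNReal.ofReal_mul (norm_nonneg x)]
  rw [lintegral_const_mul _ (by fun_prop), mul_left_comm, cc_const σ hsupp hinv, mul_one]

end

open scoped RealInnerProductSpace in
/-- Cauchy/Crofton formula: the length of a continuous plane curve equals
`π/2` times the average length (total variation) of its orthogonal projections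
`t ↦ ⟨γ t, v⟩` to lines, the average taken with respect to the uniform
(rotation-invariant) probability measure `σ` on the unit circle. -/
theorem cauchy_crofton (γ : ℝ → EuclideanSpace ℝ (Fin 2))
    (hγ : ContinuousOn γ (Set.Icc 0 1))
    (σ : MeasureTheory.Measure (EuclideanSpace ℝ (Fin 2)))
    [MeasureTheory.IsProbabilityMeasure σ]
    (hsupp : σ (Metric.sphere (0 : EuclideanSpace ℝ (Fin 2)) 1)ᶜ = 0)
    (hinv : ∀ g : EuclideanSpace ℝ (Fin 2) ≃ₗᵢ[ℝ] EuclideanSpace ℝ (Fin 2),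
      σ.map g = σ) :
    arcLen γ 0 1 = ENNReal.ofReal (Real.pi / 2) *
      ∫⁻ v, arcLen (fun t => (⟪γ t, v⟫ : ℝ)) 0 1 ∂σ := by
  have hc : ∀ v, ContinuousOn (fun t => (⟪γ t, v⟫ : ℝ)) (Set.Icc 0 1) := fun v =>
    hγ.inner continuousOn_const
  rw [cc_arcLen_eq γ hγ]
  simp_rw [fun v => cc_arcLen_eq _ (hc v)]
  have hpl : ∀ (n : ℕ) (v : EuclideanSpace ℝ (Fin 2)),
      ENNReal.ofReal (polyLen (fun t => (⟪γ t, v⟫ : ℝ)) (2 ^ n) (ccDy n)) =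
      ∑ i ∈ Finset.range (2 ^ n),
        ENNReal.ofReal |⟪γ (ccDy n (i + 1)) - γ (ccDy n i), v⟫| := by
    intro n v
    unfold polyLen
    rw [ENNReal.ofReal_sum_of_nonneg fun _ _ => norm_nonneg _]
    simp_rw [inner_sub_left, Real.norm_eq_abs]
  rw [lintegral_iSup]
  · rw [ENNReal.mul_iSup]
    congr 1
    ext1 n
    simp_rw [hpl]
    rw [lintegral_finsetSum _ (fun i _ => by fun_prop), Finset.mul_sum]
    simp_rw [cc_vec σ hsupp hinv]
    unfold polyLen
    rw [ENNReal.ofReal_sum_of_nonneg fun _ _ => norm_nonneg _]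
  · intro n
    simp_rw [hpl]
    fun_prop
  · intro n m hnm v
    exact ENNReal.ofReal_le_ofReal (cc_dyadic_mono _ hnm)
end
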